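/- Boundary local maximum principle in half-balls. For every integer n ≥ 2, reals 0 < λ ≤ Λ, exponents q > n and p with n ≤ p ≤ q, d₀ ∈ (0,1/4], K > 0, and every r > 0, there exists a constant C > 0 such that the following holds. Let b, f : B₂⁺ → ℝ be continuous with b ≥ 0 and ‖b‖_{L^q(B₂⁺)} ≤ K, and let u be continuous on B₂⁺ ∪ B₂⁰ and C² on B₂⁺, with L⁺[u] ≥ −f in B₂⁺ and u ≤ 0 on B₂⁰. Then sup_{x ∈ B₁⁺} u⁺(x)/x_n ≤ C·( (∫_{B_{3/2}⁺} (u⁺(x))^r dx)^{1/r} + ‖f⁺‖_{L^{p,q}(B₂⁺)} ). -/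

import Mathlib

open MeasureTheory
open scoped ENNReal

/-- The Pucci minimal extremal operator `𝓜⁻(M)` with ellipticity constants `lam ≤ Lam`:
the infimum of `tr(A*M)` over symmetric matrices `A` with `lam•I ≤ A ≤ Lam•I`. -/
noncomputable def pucciMinus (n : ℕ) (lam Lam : ℝ) (M : Matrix (Fin n) (Fin n) ℝ) : ℝ :=
  sInf { t : ℝ | ∃ A : Matrix (Fin n) (Fin n) ℝ, A.IsSymm ∧
    (A - lam • (1 : Matrix (Fin n) (Fin n) ℝ)).PosSemidef ∧
    (Lam • (1 : Matrix (Fin n) (Fin n) ℝ) - A).PosSemidef ∧ t = (A * M).trace }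

/-- The Pucci maximal extremal operator `𝓜⁺(M)`. -/
noncomputable def pucciPlus (n : ℕ) (lam Lam : ℝ) (M : Matrix (Fin n) (Fin n) ℝ) : ℝ :=
  sSup { t : ℝ | ∃ A : Matrix (Fin n) (Fin n) ℝ, A.IsSymm ∧
    (A - lam • (1 : Matrix (Fin n) (Fin n) ℝ)).PosSemidef ∧
    (Lam • (1 : Matrix (Fin n) (Fin n) ℝ) - A).PosSemidef ∧ t = (A * M).trace }

/-- The Hessian matrix `D²u(x)` of `u` at `x`. -/
noncomputable def hess (n : ℕ) (u : EuclideanSpace ℝ (Fin n) → ℝ)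
    (x : EuclideanSpace ℝ (Fin n)) : Matrix (Fin n) (Fin n) ℝ :=
  fun i j => fderiv ℝ (fun y => fderiv ℝ u y (EuclideanSpace.single j (1 : ℝ))) x
    (EuclideanSpace.single i (1 : ℝ))

/-- The euclidean norm `|Du(x)|` of the gradient of `u` at `x`. -/
noncomputable def gradNorm (n : ℕ) (u : EuclideanSpace ℝ (Fin n) → ℝ)
    (x : EuclideanSpace ℝ (Fin n)) : ℝ := ‖fderiv ℝ u x‖

/-- The `L^p` norm `(∫_E |g|^p)^(1/p)`, as a Lebesgue integral valued in `[0,∞]`. -/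
noncomputable def LpNormE (n : ℕ) (p : ℝ) (g : EuclideanSpace ℝ (Fin n) → ℝ)
    (E : Set (EuclideanSpace ℝ (Fin n))) : ℝ≥0∞ :=
  (∫⁻ x in E, ENNReal.ofReal (|g x| ^ p)) ^ (1 / p)

/-- The last (`n`-th) coordinate `x_n` of a point of `ℝⁿ`. -/
def lastC (n : ℕ) (hn : 1 ≤ n) (x : EuclideanSpace ℝ (Fin n)) : ℝ := x ⟨n - 1, by omega⟩

/-- The open half-ball `B_R⁺ = {|x| < R, x_n > 0}`. -/
def halfBall (n : ℕ) (hn : 1 ≤ n) (R : ℝ) : Set (EuclideanSpace ℝ (Fin n)) :=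
  {x | ‖x‖ < R ∧ 0 < lastC n hn x}

/-- The flat boundary part `B_R⁰ = {|x| ≤ R, x_n = 0}`. -/
def flatB (n : ℕ) (hn : 1 ≤ n) (R : ℝ) : Set (EuclideanSpace ℝ (Fin n)) :=
  {x | ‖x‖ ≤ R ∧ lastC n hn x = 0}

/-- The norm `‖g‖_{L^{p,q}(B_R⁺)} = ‖g‖_{L^p(B_R⁺)} + ‖g‖_{L^q(B_R⁺ ∩ {x_n < d0})}`. -/
noncomputable def LpqNormHB (n : ℕ) (hn : 1 ≤ n) (p q d0 R : ℝ)
    (g : EuclideanSpace ℝ (Fin n) → ℝ) : ℝ≥0∞ :=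
  LpNormE n p g (halfBall n hn R) +
    LpNormE n q g {x ∈ halfBall n hn R | lastC n hn x < d0}

/-- The open cube `Q_ρ` of side `ρ` centered at `(0,…,0,ρ/2)`. -/
def cubeQ (n : ℕ) (hn : 1 ≤ n) (ρ : ℝ) : Set (EuclideanSpace ℝ (Fin n)) :=
  {x | (∀ i : Fin n, i.1 ≠ n - 1 → |x i| < ρ / 2) ∧ 0 < lastC n hn x ∧ lastC n hn x < ρ}

/-- The norm `‖g‖_{L^{p,q}(Q₂)} = ‖g‖_{L^p(Q₂)} + ‖g‖_{L^q(Q₂ ∩ {x_n < d0})}`. -/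
noncomputable def LpqNormQ (n : ℕ) (hn : 1 ≤ n) (p q d0 : ℝ)
    (g : EuclideanSpace ℝ (Fin n) → ℝ) : ℝ≥0∞ :=
  LpNormE n p g (cubeQ n hn 2) +
    LpNormE n q g {x ∈ cubeQ n hn 2 | lastC n hn x < d0}

/-!
In the interior of the ball, multiply the subsolution by a power of a cutoff and apply the
Alexandroff–Bakelman–Pucci estimate: the drift and the cutoff only produce terms that are controlled
by a power less than one of the maximum, and absorbing these bounds `u` by the `L^r` norm of its
positive part and the `L^n` norm of the source. No boundary term appears on the flat part because
`u ≤ 0` there.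

At a point of the flat part, compare `u` on shrinking half-balls with a quadratic polynomial that is
strictly concave in the normal direction. As `q > n`, the error left by the lower order terms gains
a power of the radius at each scale, so the slopes of the linear upper bounds in `x_n` form a
convergent series. Centering this estimate at the projection of `x` bounds `u x / x_n`.
-/

open Filter Metric Set
open scoped Matrix NNReal Topology

local notation "ℝ^" n:max => EuclideanSpace ℝ (Fin n)

section PosSemidef

theorem two_mul_abs_apply_le_of_posSemidef {ι : Type*} {A : Matrix ι ι ℝ} (hA : A.PosSemidef)
    (i j : ι) : 2 * |A i j| ≤ A i i + A j j := by
  have hsymm : A j i = A i j := hA.1.apply i j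
  have hadd := (hA.submatrix ![i, j]).dotProduct_mulVec_nonneg ![1, 1]
  have hsub := (hA.submatrix ![i, j]).dotProduct_mulVec_nonneg ![1, -1]
  simp [Matrix.mulVec, dotProduct, hsymm] at hadd hsub
  cases abs_cases (A i j) <;> linarith

variable {ι : Type*} [Fintype ι] {A B : Matrix ι ι ℝ}

open scoped MatrixOrder Matrix.Norms.L2Operator in
theorem posSemidef_trace_mul_nonneg (hA : A.PosSemidef) (hB : B.PosSemidef) :
    0 ≤ (A * B).trace := by
  classical
  obtain ⟨C, rfl⟩ := CStarAlgebra.nonneg_iff_eq_star_mul_self.mp hA.nonneg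
  rw [Matrix.mul_assoc, Matrix.trace_mul_comm]
  exact (hB.mul_mul_conjTranspose_same C).trace_nonneg

theorem det_le_trace_pow_card [DecidableEq ι] (hA : A.PosSemidef) :
    A.det ≤ A.trace ^ Fintype.card ι := by
  have hdet : A.det = ∏ i, hA.1.eigenvalues i := by simpa using hA.1.det_eq_prod_eigenvalues
  have htrace : A.trace = ∑ i, hA.1.eigenvalues i := by simpa using hA.1.trace_eq_sum_eigenvalues
  calc A.det = ∏ i, hA.1.eigenvalues i := hdet
    _ ≤ ∏ _i : ι, ∑ j, hA.1.eigenvalues j :=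
      Finset.prod_le_prod (fun i _ ↦ hA.eigenvalues_nonneg i) fun i hi ↦
        Finset.single_le_sum (fun j _ ↦ hA.eigenvalues_nonneg j) hi
    _ = A.trace ^ Fintype.card ι := by simp [htrace]

end PosSemidef

section Elliptic

variable {n : ℕ} {lam Lam : ℝ} {A : Matrix (Fin n) (Fin n) ℝ}

/-- The matrices over which the Pucci operators take their extrema: the symmetric `A` with
`lam • 1 ≤ A ≤ Lam • 1`. -/
structure IsElliptic {n : ℕ} (lam Lam : ℝ) (A : Matrix (Fin n) (Fin n) ℝ) : Prop where
  isSymm : A.IsSymm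
  lower : (A - lam • (1 : Matrix (Fin n) (Fin n) ℝ)).PosSemidef
  upper : (Lam • (1 : Matrix (Fin n) (Fin n) ℝ) - A).PosSemidef

namespace IsElliptic

theorem smul_one (h : lam ≤ Lam) :
    IsElliptic lam Lam (lam • (1 : Matrix (Fin n) (Fin n) ℝ)) where
  isSymm := Matrix.isSymm_one.smul lam
  lower := by simpa using Matrix.PosSemidef.zero
  upper := by simpa only [← sub_smul] using Matrix.PosSemidef.one.smul (sub_nonneg.mpr h)

theorem le_apply_self (hA : IsElliptic lam Lam A) (i : Fin n) : lam ≤ A i i := by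
  simpa using hA.lower.diag_nonneg (i := i)

theorem apply_self_le (hA : IsElliptic lam Lam A) (i : Fin n) : A i i ≤ Lam := by
  simpa using hA.upper.diag_nonneg (i := i)

theorem posSemidef (hA : IsElliptic lam Lam A) (hlam : 0 ≤ lam) : A.PosSemidef := by
  simpa using hA.lower.add (Matrix.PosSemidef.one.smul hlam)

theorem abs_apply_le (hA : IsElliptic lam Lam A) (hlam : 0 ≤ lam) (i j : Fin n) :
    |A i j| ≤ Lam := by
  linarith [two_mul_abs_apply_le_of_posSemidef (hA.posSemidef hlam) i j, hA.apply_self_le i,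
    hA.apply_self_le j]

theorem trace_le (hA : IsElliptic lam Lam A) : A.trace ≤ n * Lam := by
  simpa [Matrix.trace] using Finset.sum_le_sum fun i (_ : i ∈ Finset.univ) ↦ hA.apply_self_le i

theorem trace_mul_le_of_abs_apply_le (hA : IsElliptic lam Lam A) (hlam : 0 ≤ lam)
    {X : Matrix (Fin n) (Fin n) ℝ} {s : ℝ} (hX : ∀ i j, |X i j| ≤ s) :
    (A * X).trace ≤ n ^ 2 * Lam * s := by
  have hentry (i j : Fin n) : A i j * X j i ≤ Lam * s := by
    have hAij := hA.abs_apply_le hlam i j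
    calc A i j * X j i ≤ |A i j| * |X j i| := (le_abs_self _).trans_eq (abs_mul _ _)
      _ ≤ Lam * s := mul_le_mul hAij (hX j i) (abs_nonneg _) ((abs_nonneg _).trans hAij)
  calc (A * X).trace = ∑ i, ∑ j, A i j * X j i := by simp [Matrix.trace, Matrix.mul_apply]
    _ ≤ ∑ _i : Fin n, ∑ _j : Fin n, Lam * s :=
      Finset.sum_le_sum fun i _ ↦ Finset.sum_le_sum fun j _ ↦ hentry i j
    _ = n ^ 2 * Lam * s := by simp; ring

theorem trace_mul_le_of_neg_posSemidef (hA : IsElliptic lam Lam A)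
    {H : Matrix (Fin n) (Fin n) ℝ} (hH : (-H).PosSemidef) :
    (A * H).trace ≤ lam * H.trace := by
  have := posSemidef_trace_mul_nonneg hA.lower hH
  simp [Matrix.sub_mul] at this
  linarith

end IsElliptic

theorem pucciPlus_le {M : Matrix (Fin n) (Fin n) ℝ} {t : ℝ} (h : lam ≤ Lam)
    (ht : ∀ A, IsElliptic lam Lam A → (A * M).trace ≤ t) : pucciPlus n lam Lam M ≤ t := by
  have hone := IsElliptic.smul_one (n := n) h
  refine csSup_le ⟨_, _, hone.isSymm, hone.lower, hone.upper, rfl⟩ ?_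
  rintro _ ⟨A, hsymm, hlow, hup, rfl⟩
  exact ht A ⟨hsymm, hlow, hup⟩

theorem mul_pucciPlus_le_of_smul_eq_add {M H X : Matrix (Fin n) (Fin n) ℝ} {s t : ℝ}
    (h : lam ≤ Lam) (hs : 0 < s) (hM : s • M = H + X) (hH : (-H).PosSemidef)
    (hX : ∀ A, IsElliptic lam Lam A → (A * X).trace ≤ t) :
    s * pucciPlus n lam Lam M ≤ lam * H.trace + t := by
  rw [← le_div_iff₀' hs]
  refine pucciPlus_le h fun A hA ↦ (le_div_iff₀' hs).mpr ?_
  calc s * (A * M).trace = (A * H).trace + (A * X).trace := by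
        rw [← smul_eq_mul, ← Matrix.trace_smul, ← Matrix.mul_smul, hM, Matrix.mul_add,
          Matrix.trace_add]
    _ ≤ lam * H.trace + t := add_le_add (hA.trace_mul_le_of_neg_posSemidef hH) (hX A hA)

end Elliptic

section Hessian

theorem eventually_hasFDerivAt_of_contDiffAt {E F : Type*} [NormedAddCommGroup E]
    [NormedSpace ℝ E] [NormedAddCommGroup F] [NormedSpace ℝ F] {u : E → F} {x : E}
    (hu : ContDiffAt ℝ 2 u x) : ∀ᶠ y in 𝓝 x, HasFDerivAt u (fderiv ℝ u y) y := by
  filter_upwards [hu.eventually (by simp)] with y hy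
  exact (hy.differentiableAt two_ne_zero).hasFDerivAt

theorem hasFDerivAt_fderiv_of_contDiffAt {E F : Type*} [NormedAddCommGroup E]
    [NormedSpace ℝ E] [NormedAddCommGroup F] [NormedSpace ℝ F] {u : E → F} {x : E}
    (hu : ContDiffAt ℝ 2 u x) :
    HasFDerivAt (fderiv ℝ u) (fderiv ℝ (fderiv ℝ u) x) x :=
  ((hu.fderiv_right (m := 1) (by norm_num)).differentiableAt one_ne_zero).hasFDerivAt

variable {n : ℕ}

variable {u v : ℝ^n → ℝ} {x : ℝ^n}

theorem hess_apply_of_hasFDerivAt {u' : ℝ^n → ℝ^n →L[ℝ] ℝ} {u'' : ℝ^n →L[ℝ] ℝ^n →L[ℝ] ℝ}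
    (hu : ∀ᶠ y in 𝓝 x, HasFDerivAt u (u' y) y) (hu' : HasFDerivAt u' u'' x) (i j : Fin n) :
    hess n u x i j = u'' (EuclideanSpace.single i 1) (EuclideanSpace.single j 1) := by
  have hpartial : (fun y ↦ fderiv ℝ u y (EuclideanSpace.single j 1)) =ᶠ[𝓝 x]
      fun y ↦ u' y (EuclideanSpace.single j 1) := by
    filter_upwards [hu] with y hy
    rw [hy.fderiv]
  rw [hess, hpartial.fderiv_eq, (hu'.clm_apply (hasFDerivAt_const _ x)).fderiv]
  simp

theorem hess_apply (hu : ContDiffAt ℝ 2 u x) (i j : Fin n) :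
    hess n u x i j =
      fderiv ℝ (fderiv ℝ u) x (EuclideanSpace.single i 1) (EuclideanSpace.single j 1) :=
  hess_apply_of_hasFDerivAt (eventually_hasFDerivAt_of_contDiffAt hu)
    (hasFDerivAt_fderiv_of_contDiffAt hu) i j

theorem hess_isSymm (hu : ContDiffAt ℝ 2 u x) : (hess n u x).IsSymm := by
  ext i j
  rw [Matrix.transpose_apply, hess_apply hu, hess_apply hu]
  exact hu.isSymmSndFDerivAt (by simp) _ _

theorem dotProduct_hess_mulVec (hu : ContDiffAt ℝ 2 u x) (w : Fin n → ℝ) :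
    w ⬝ᵥ hess n u x *ᵥ w = fderiv ℝ (fderiv ℝ u) x (WithLp.toLp 2 w) (WithLp.toLp 2 w) := by
  have hw : WithLp.toLp 2 w = ∑ i, w i • EuclideanSpace.single i (1 : ℝ) := by
    simpa using ((EuclideanSpace.basisFun (Fin n) ℝ).sum_repr (WithLp.toLp 2 w)).symm
  simp only [hw, dotProduct, Matrix.mulVec, hess_apply hu, map_sum, map_smul,
    sum_apply, smul_apply, smul_eq_mul, Finset.mul_sum]
  rw [Finset.sum_comm]
  exact Finset.sum_congr rfl fun i _ ↦ Finset.sum_congr rfl fun j _ ↦ by ring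

theorem neg_hess_posSemidef_iff (hu : ContDiffAt ℝ 2 u x) :
    (-hess n u x).PosSemidef ↔ ∀ w, fderiv ℝ (fderiv ℝ u) x w w ≤ 0 := by
  have hquad (w : Fin n → ℝ) : star w ⬝ᵥ (-hess n u x) *ᵥ w =
      -fderiv ℝ (fderiv ℝ u) x (WithLp.toLp 2 w) (WithLp.toLp 2 w) := by
    rw [star_trivial, Matrix.neg_mulVec, dotProduct_neg, dotProduct_hess_mulVec hu]
  refine ⟨fun h w ↦ ?_, fun h ↦ .of_dotProduct_mulVec_nonneg ?_ fun w ↦ ?_⟩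
  · simpa only [hquad, neg_nonneg] using h.dotProduct_mulVec_nonneg w.ofLp
  · exact (hess_isSymm hu).neg
  · rw [hquad, neg_nonneg]
    exact h _

theorem hess_sub (hu : ContDiffAt ℝ 2 u x) (hv : ContDiffAt ℝ 2 v x) :
    hess n (u - v) x = hess n u x - hess n v x := by
  ext i j
  have h : ∀ᶠ y in 𝓝 x, HasFDerivAt (u - v) ((fderiv ℝ u - fderiv ℝ v) y) y := by
    filter_upwards [eventually_hasFDerivAt_of_contDiffAt hu,
      eventually_hasFDerivAt_of_contDiffAt hv] with y hy hy'
    exact hy.sub hy'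
  rw [hess_apply_of_hasFDerivAt h
    ((hasFDerivAt_fderiv_of_contDiffAt hu).sub (hasFDerivAt_fderiv_of_contDiffAt hv)),
    Matrix.sub_apply, hess_apply hu, hess_apply hv]
  rfl

theorem hess_mul_apply (hu : ContDiffAt ℝ 2 u x) (hv : ContDiffAt ℝ 2 v x) (i j : Fin n) :
    hess n (u * v) x i j = u x * hess n v x i j + v x * hess n u x i j
      + fderiv ℝ u x (EuclideanSpace.single i 1) * fderiv ℝ v x (EuclideanSpace.single j 1)
      + fderiv ℝ v x (EuclideanSpace.single i 1) * fderiv ℝ u x (EuclideanSpace.single j 1) := by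
  have h : ∀ᶠ y in 𝓝 x, HasFDerivAt (u * v) (u y • fderiv ℝ v y + v y • fderiv ℝ u y) y := by
    filter_upwards [eventually_hasFDerivAt_of_contDiffAt hu,
      eventually_hasFDerivAt_of_contDiffAt hv] with y hy hy'
    exact hy.mul hy'
  rw [hess_apply_of_hasFDerivAt h
    (((hu.differentiableAt two_ne_zero).hasFDerivAt.smul
      (hasFDerivAt_fderiv_of_contDiffAt hv)).add
    ((hv.differentiableAt two_ne_zero).hasFDerivAt.smul
      (hasFDerivAt_fderiv_of_contDiffAt hu))), hess_apply hu, hess_apply hv]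
  simp
  ring

theorem hess_pow_add_two_apply (hu : ContDiffAt ℝ 2 u x) (m : ℕ) (i j : Fin n) :
    hess n (u ^ (m + 2)) x i j = (m + 2) * u x ^ (m + 1) * hess n u x i j
      + (m + 2) * (m + 1) * u x ^ m * fderiv ℝ u x (EuclideanSpace.single i 1)
        * fderiv ℝ u x (EuclideanSpace.single j 1) := by
  have h : ∀ᶠ y in 𝓝 x,
      HasFDerivAt (u ^ (m + 2)) (((m + 2 : ℕ) * u y ^ (m + 1)) • fderiv ℝ u y) y := by
    filter_upwards [eventually_hasFDerivAt_of_contDiffAt hu] with y hy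
    exact (hy.pow (m + 2)).congr_fderiv (by simp)
  have hux := (hu.differentiableAt two_ne_zero).hasFDerivAt
  rw [hess_apply_of_hasFDerivAt h
    (((hux.pow (m + 1)).const_mul _).smul (hasFDerivAt_fderiv_of_contDiffAt hu)), hess_apply hu]
  simp only [Nat.cast_add, Nat.cast_ofNat, add_tsub_cancel_right, Nat.cast_one,
    nsmul_eq_mul, add_apply, smul_apply, ContinuousLinearMap.smulRight_apply, smul_eq_mul]
  ring

theorem hasFDerivAt_norm_sub_sq (c x : ℝ^n) :
    HasFDerivAt (fun y ↦ ‖y - c‖ ^ 2) (2 • innerSL ℝ (x - c)) x := by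
  simpa using ((hasFDerivAt_id x).sub_const c).norm_sq

theorem norm_two_nsmul_innerSL (x : ℝ^n) : ‖2 • innerSL ℝ x‖ = 2 * ‖x‖ := by
  rw [← Nat.cast_smul_eq_nsmul ℝ, norm_smul, innerSL_apply_norm, Nat.cast_ofNat, Real.norm_ofNat]

theorem hasFDerivAt_two_nsmul_innerSL_sub (c x : ℝ^n) :
    HasFDerivAt (fun y ↦ 2 • innerSL ℝ (y - c)) (2 • innerSL ℝ) x :=
  ((innerSL ℝ).hasFDerivAt.comp x ((hasFDerivAt_id x).sub_const c)).const_smul 2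

theorem two_nsmul_innerSL_single_single (i j : Fin n) :
    (2 • innerSL ℝ : ℝ^n →L[ℝ] ℝ^n →L[ℝ] ℝ) (EuclideanSpace.single i 1)
      (EuclideanSpace.single j 1) = 2 * (1 : Matrix (Fin n) (Fin n) ℝ) i j := by
  change 2 • inner ℝ (EuclideanSpace.single i (1 : ℝ)) (EuclideanSpace.single j (1 : ℝ)) = _
  rw [EuclideanSpace.inner_single_left]
  simp [Matrix.one_apply]

end Hessian

section ABP

theorem deriv_deriv_nonpos_of_isLocalMax {g : ℝ → ℝ} {a : ℝ} (hmax : IsLocalMax g a)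
    (hg : ContinuousAt g a) : deriv (deriv g) a ≤ 0 := by
  by_contra! hpos
  have hmin : IsLocalMin g a := isLocalMin_of_deriv_deriv_pos hpos hmax.deriv_eq_zero hg
  have hconst : g =ᶠ[𝓝 a] fun _ ↦ g a := by
    filter_upwards [hmax, hmin] with t hle hge using le_antisymm hle hge
  exact hpos.ne' (by simpa using hconst.deriv.deriv_eq)

theorem fderiv_fderiv_nonpos_of_isLocalMax_sub {E : Type*} [NormedAddCommGroup E]
    [NormedSpace ℝ E] {v : E → ℝ} {x : E} (hv : ContDiffAt ℝ 2 v x) (L : E →L[ℝ] ℝ)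
    (hmax : IsLocalMax (fun y ↦ v y - L y) x) (w : E) : fderiv ℝ (fderiv ℝ v) x w w ≤ 0 := by
  have hline (t : ℝ) : HasDerivAt (fun t : ℝ ↦ x + t • w) w t := by
    simpa using ((hasDerivAt_id t).smul_const w).const_add x
  have htend : Tendsto (fun t : ℝ ↦ x + t • w) (𝓝 0) (𝓝 x) := by
    simpa using (hline 0).continuousAt.tendsto
  have hderiv : ∀ᶠ t in 𝓝 (0 : ℝ), HasDerivAt (fun t ↦ v (x + t • w) - L (x + t • w))
      (fderiv ℝ v (x + t • w) w - L w) t := by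
    filter_upwards [htend.eventually (eventually_hasFDerivAt_of_contDiffAt hv)] with t ht
    exact (ht.comp_hasDerivAt t (hline t)).sub (L.hasFDerivAt.comp_hasDerivAt t (hline t))
  have hfderiv : HasFDerivAt (fderiv ℝ v) (fderiv ℝ (fderiv ℝ v) x) (x + (0 : ℝ) • w) := by
    rw [zero_smul, add_zero]
    exact hasFDerivAt_fderiv_of_contDiffAt hv
  have hderiv' : HasDerivAt (fun t : ℝ ↦ fderiv ℝ v (x + t • w) w - L w)
      (fderiv ℝ (fderiv ℝ v) x w w) 0 := by
    have hcomp : HasDerivAt (fun t : ℝ ↦ fderiv ℝ v (x + t • w))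
        (fderiv ℝ (fderiv ℝ v) x w) 0 := hfderiv.comp_hasDerivAt (0 : ℝ) (hline 0)
    exact ((ContinuousLinearMap.apply ℝ ℝ w).hasFDerivAt.comp_hasDerivAt 0 hcomp).sub_const (L w)
  have hlinemax : IsLocalMax (fun t : ℝ ↦ v (x + t • w) - L (x + t • w)) 0 := by
    simpa [IsLocalMax, IsMaxFilter] using htend.eventually hmax
  rw [← hderiv'.deriv, ← EventuallyEq.deriv_eq (hderiv.mono fun t ht ↦ ht.deriv)]
  exact deriv_deriv_nonpos_of_isLocalMax hlinemax hderiv.self_of_nhds.continuousAt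

theorem measurableSet_inter_preimage_of_isClosed {X Y : Type*} [TopologicalSpace X]
    [MeasurableSpace X] [BorelSpace X] [TopologicalSpace Y] {f : X → Y} {s : Set X} {t : Set Y}
    (hs : MeasurableSet s) (hf : ContinuousOn f s) (ht : IsClosed t) :
    MeasurableSet (s ∩ f ⁻¹' t) := by
  obtain ⟨c, hc, hfc⟩ := continuousOn_iff_isClosed.mp hf t ht
  rw [inter_comm, hfc]
  exact hc.measurableSet.inter hs

variable {n : ℕ} {v : ℝ^n → ℝ} {Ω : Set (ℝ^n)} {c x z p : ℝ^n} {R : ℝ}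

theorem exists_hasFDerivAt_gradient_det_eq (hv : ContDiffAt ℝ 2 v x) :
    ∃ T : ℝ^n →L[ℝ] ℝ^n, HasFDerivAt (gradient v) T x ∧ T.det = (hess n v x).det := by
  let J : StrongDual ℝ (ℝ^n) →L[ℝ] ℝ^n :=
    (InnerProductSpace.toDual ℝ (ℝ^n)).symm.toContinuousLinearEquiv.toContinuousLinearMap
  have hJ (L : StrongDual ℝ (ℝ^n)) (i : Fin n) : J L i = L (EuclideanSpace.single i 1) := by
    rw [← InnerProductSpace.toDual_symm_apply (y := L), EuclideanSpace.inner_single_right]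
    simp [J]
  refine ⟨J ∘L fderiv ℝ (fderiv ℝ v) x,
    J.hasFDerivAt.comp x (hasFDerivAt_fderiv_of_contDiffAt hv), ?_⟩
  rw [ContinuousLinearMap.det,
    ← LinearMap.det_toMatrix (EuclideanSpace.basisFun (Fin n) ℝ).toBasis,
    ← (hess_isSymm hv).eq, Matrix.det_transpose, ← Matrix.det_transpose]
  congr 1
  ext i j
  simp [LinearMap.toMatrix_apply, hJ, hess_apply hv]

/-- The points of `Ω` at which the graph of `v` touches from below a plane of slope less than `m`
which is nonnegative on the ball of center `c` and radius `R`: the part of the classical upper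
contact set that enters the Alexandroff–Bakelman–Pucci estimate. Only the pointwise consequences
of the contact are recorded. -/
def upperContactSet (v : ℝ^n → ℝ) (Ω : Set (ℝ^n)) (c : ℝ^n) (R m : ℝ) : Set (ℝ^n) :=
  {x ∈ Ω | 0 < v x ∧ ‖fderiv ℝ v x‖ < m ∧ ‖fderiv ℝ v x‖ * (R - ‖x - c‖) ≤ v x ∧
    (-hess n v x).PosSemidef}

theorem measurableSet_upperContactSet (hΩ : IsOpen Ω) (hv : ContDiffOn ℝ 2 v Ω) (m : ℝ) :
    MeasurableSet (upperContactSet v Ω c R m) := by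
  have hv' : ContinuousOn (fderiv ℝ v) Ω := hv.continuousOn_fderiv_of_isOpen hΩ (by norm_num)
  have hv'' : ContinuousOn (fderiv ℝ (fderiv ℝ v)) Ω :=
    (hv.fderiv_of_isOpen (m := 1) hΩ (by norm_num)).continuousOn_fderiv_of_isOpen hΩ le_rfl
  have hclosed : IsClosed {H : ℝ^n →L[ℝ] ℝ^n →L[ℝ] ℝ | ∀ w, H w w ≤ 0} := by
    simp only [ofPred_forall]
    exact isClosed_iInter fun w ↦ isClosed_le (by fun_prop) continuous_const
  have hpos : IsOpen (Ω ∩ v ⁻¹' Ioi 0) := hv.continuousOn.isOpen_inter_preimage hΩ isOpen_Ioi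
  have hslope : IsOpen (Ω ∩ (fun x ↦ ‖fderiv ℝ v x‖) ⁻¹' Iio m) :=
    hv'.norm.isOpen_inter_preimage hΩ isOpen_Iio
  have hgrowth := measurableSet_inter_preimage_of_isClosed hΩ.measurableSet
    ((hv'.norm.mul (g := fun x ↦ R - ‖x - c‖) (by fun_prop)).sub hv.continuousOn)
    (isClosed_Iic (a := 0))
  have hconcave := measurableSet_inter_preimage_of_isClosed hΩ.measurableSet hv'' hclosed
  convert (hpos.measurableSet.inter hslope.measurableSet).inter (hgrowth.inter hconcave) using 1
  ext x
  by_cases hx : x ∈ Ω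
  · simp [upperContactSet, hx, neg_hess_posSemidef_iff (hv.contDiffAt (hΩ.mem_nhds hx)), and_assoc]
  · simp [upperContactSet, hx]

theorem exists_isMaxOn_sub_inner (hΩR : Ω ⊆ ball c R)
    (hcont : ContinuousOn v (closure Ω)) (hbdry : ∀ x ∈ closure Ω \ Ω, v x ≤ 0) (hz : z ∈ Ω)
    (hp : ‖p‖ < v z / (2 * R)) :
    ∃ x ∈ Ω, IsMaxOn (fun y ↦ v y - inner ℝ p y) Ω x ∧
      ∀ y ∈ closedBall c R, 0 < v x + inner ℝ p (y - x) := by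
  have hR : 0 < R := dist_nonneg.trans_lt (hΩR hz)
  have hclosure : closure Ω ⊆ closedBall c R :=
    closure_minimal (hΩR.trans ball_subset_closedBall) isClosed_closedBall
  obtain ⟨x, hx, hmax⟩ := ((isCompact_closedBall c R).of_isClosed_subset isClosed_closure
    hclosure).exists_isMaxOn ⟨z, subset_closure hz⟩
    (f := fun y ↦ v y - inner ℝ p y) (hcont.sub (by fun_prop))
  have hplane (y) (hy : y ∈ closedBall c R) : 0 < v x + inner ℝ p (y - x) := by
    have hyz : ‖y - z‖ ≤ 2 * R := by
      linarith [dist_eq_norm y z, dist_triangle_right y z c, mem_closedBall.mp hy,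
        mem_ball.mp (hΩR hz)]
    have hmaxz : v z - inner ℝ p z ≤ v x - inner ℝ p x := hmax (subset_closure hz)
    have hinner : -(‖p‖ * ‖y - z‖) ≤ inner ℝ p y - inner ℝ p z :=
      inner_sub_right (𝕜 := ℝ) p y z ▸ neg_le_of_abs_le (abs_real_inner_le_norm p (y - z))
    have hpR : ‖p‖ * (2 * R) < v z := (lt_div_iff₀ (by positivity)).mp hp
    rw [inner_sub_right]
    linarith [mul_le_mul_of_nonneg_left hyz (norm_nonneg p)]
  have hvx : 0 < v x := by simpa using hplane x (hclosure hx)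
  exact ⟨x, not_imp_comm.mp (fun h ↦ hbdry x ⟨hx, h⟩) hvx.not_ge,
    hmax.on_subset subset_closure, hplane⟩

theorem norm_mul_le_of_forall_inner_nonneg {F : Type*} [NormedAddCommGroup F]
    [InnerProductSpace ℝ F] {c x p : F} {R a : ℝ} (hx : x ∈ closedBall c R)
    (h : ∀ y ∈ closedBall c R, 0 ≤ a + inner ℝ p (y - x)) : ‖p‖ * (R - ‖x - c‖) ≤ a := by
  have hxR : 0 ≤ R - ‖x - c‖ := sub_nonneg.mpr (mem_closedBall_iff_norm.mp hx)
  rcases eq_or_ne p 0 with rfl | hp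
  · simpa using h x hx
  have hp' : 0 < ‖p‖ := norm_pos_iff.mpr hp
  have hy : x - ((R - ‖x - c‖) / ‖p‖) • p ∈ closedBall c R := by
    rw [mem_closedBall_iff_norm, sub_right_comm]
    calc ‖x - c - ((R - ‖x - c‖) / ‖p‖) • p‖
        ≤ ‖x - c‖ + ‖((R - ‖x - c‖) / ‖p‖) • p‖ := norm_sub_le _ _
      _ = R := by
        rw [norm_smul, Real.norm_of_nonneg (by positivity), div_mul_cancel₀ _ hp'.ne']
        ring
  have hinner := h _ hy
  rw [sub_sub_cancel_left, inner_neg_right, inner_smul_right, real_inner_self_eq_norm_sq] at hinner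
  calc ‖p‖ * (R - ‖x - c‖) = (R - ‖x - c‖) / ‖p‖ * ‖p‖ ^ 2 := by field_simp
    _ ≤ a := by linarith

theorem ball_subset_gradient_image_upperContactSet (hΩ : IsOpen Ω) (hΩR : Ω ⊆ ball c R)
    (hcont : ContinuousOn v (closure Ω)) (hv : ContDiffOn ℝ 2 v Ω)
    (hbdry : ∀ x ∈ closure Ω \ Ω, v x ≤ 0) (hz : z ∈ Ω) :
    ball 0 (v z / (2 * R)) ⊆ gradient v '' upperContactSet v Ω c R (v z / (2 * R)) := by
  intro p hp
  rw [mem_ball_zero_iff] at hp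
  obtain ⟨x, hx, hmax, hplane⟩ := exists_isMaxOn_sub_inner hΩR hcont hbdry hz hp
  have hvx : ContDiffAt ℝ 2 v x := hv.contDiffAt (hΩ.mem_nhds hx)
  have hloc : IsLocalMax (fun y ↦ v y - innerSL ℝ p y) x := hmax.isLocalMax (hΩ.mem_nhds hx)
  have hfderiv : fderiv ℝ v x = innerSL ℝ p := sub_eq_zero.mp <| hloc.hasFDerivAt_eq_zero <|
    (hvx.differentiableAt two_ne_zero).hasFDerivAt.sub (innerSL ℝ p).hasFDerivAt
  have hnorm : ‖fderiv ℝ v x‖ = ‖p‖ := by rw [hfderiv]; exact innerSL_apply_norm ℝ p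
  have hxR := ball_subset_closedBall (hΩR hx)
  refine ⟨x, ⟨hx, by simpa using hplane x hxR, hnorm ▸ hp, hnorm ▸
    norm_mul_le_of_forall_inner_nonneg hxR fun y hy ↦ (hplane y hy).le,
    (neg_hess_posSemidef_iff hvx).mpr (fderiv_fderiv_nonpos_of_isLocalMax_sub hvx _ hloc)⟩, ?_⟩
  rw [gradient, hfderiv]
  exact (InnerProductSpace.toDual ℝ _).symm_apply_apply p

theorem volume_ball_le_lintegral_upperContactSet (hΩ : IsOpen Ω) (hΩR : Ω ⊆ ball c R)
    (hcont : ContinuousOn v (closure Ω)) (hv : ContDiffOn ℝ 2 v Ω)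
    (hbdry : ∀ x ∈ closure Ω \ Ω, v x ≤ 0) (hz : z ∈ Ω) :
    volume (ball (0 : ℝ^n) (v z / (2 * R))) ≤
      ∫⁻ x in upperContactSet v Ω c R (v z / (2 * R)),
        ENNReal.ofReal ((-hess n v x).trace ^ n) := by
  have hmeas := measurableSet_upperContactSet (c := c) (R := R) hΩ hv (v z / (2 * R))
  choose! T hT hdet using fun x (hx : x ∈ upperContactSet v Ω c R (v z / (2 * R))) ↦
    exists_hasFDerivAt_gradient_det_eq (hv.contDiffAt (hΩ.mem_nhds hx.1))
  refine (measure_mono (ball_subset_gradient_image_upperContactSet hΩ hΩR hcont hv hbdry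
    hz)).trans <| (addHaar_image_le_lintegral_abs_det_fderiv volume hmeas fun x hx ↦
      (hT x hx).hasFDerivWithinAt).trans <| setLIntegral_mono' hmeas fun x hx ↦
      ENNReal.ofReal_le_ofReal ?_
  have hpsd : (-hess n v x).PosSemidef := hx.2.2.2.2
  calc |(T x).det| = (-hess n v x).det := by
        rw [hdet x hx, ← abs_of_nonneg hpsd.det_nonneg, Matrix.det_neg, abs_mul]
        simp
    _ ≤ (-hess n v x).trace ^ n := by simpa using det_le_trace_pow_card hpsd

/-- The constant of the Alexandroff–Bakelman–Pucci estimate, `2 / |B₁|^{1/n}`. -/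
noncomputable def abpConst (n : ℕ) : ℝ :=
  2 / (volume (ball (0 : ℝ^n) 1)).toReal ^ (1 / (n : ℝ))

theorem abpConst_pos (n : ℕ) : 0 < abpConst n :=
  div_pos two_pos <| Real.rpow_pos_of_pos
    (ENNReal.toReal_pos (measure_ball_pos _ _ one_pos).ne' measure_ball_lt_top.ne) _

theorem le_abpConst_mul_of_neg_trace_hess_le (hn : n ≠ 0) (hΩ : IsOpen Ω) (hΩR : Ω ⊆ ball c R)
    (hcont : ContinuousOn v (closure Ω)) (hv : ContDiffOn ℝ 2 v Ω)
    (hbdry : ∀ x ∈ closure Ω \ Ω, v x ≤ 0) (hz : z ∈ Ω) {g : ℝ^n → ℝ} {A : ℝ≥0}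
    (hg : ∀ x ∈ upperContactSet v Ω c R (v z / (2 * R)), (-hess n v x).trace ≤ g x)
    (hA : eLpNorm' g n (volume.restrict Ω) ≤ A) : v z ≤ abpConst n * R * A := by
  have hR : 0 < R := dist_nonneg.trans_lt (hΩR hz)
  rcases le_or_gt (v z) 0 with hvz | hvz
  · exact hvz.trans (by have := abpConst_pos n; positivity)
  have hn' : (0 : ℝ) < n := by positivity
  have hm : 0 < v z / (2 * R) := by positivity
  set ω := (volume (ball (0 : ℝ^n) 1)).toReal with hω
  have hω0 : 0 < ω := ENNReal.toReal_pos (measure_ball_pos _ _ one_pos).ne' measure_ball_lt_top.ne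
  have hvol : ENNReal.ofReal (v z / (2 * R) * ω ^ (1 / (n : ℝ))) ^ (n : ℝ) =
      volume (ball (0 : ℝ^n) (v z / (2 * R))) := by
    rw [Measure.addHaar_ball_of_pos volume 0 hm, finrank_euclideanSpace_fin,
      ← ENNReal.ofReal_toReal measure_ball_lt_top.ne, ← hω, ← ENNReal.ofReal_mul (by positivity),
      ENNReal.ofReal_rpow_of_nonneg (by positivity) hn'.le,
      Real.mul_rpow hm.le (by positivity), ← Real.rpow_mul hω0.le, one_div_mul_cancel hn'.ne',
      Real.rpow_one, Real.rpow_natCast]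
  have hint : ENNReal.ofReal (v z / (2 * R) * ω ^ (1 / (n : ℝ))) ^ (n : ℝ) ≤
      ∫⁻ x in Ω, ‖g x‖ₑ ^ (n : ℝ) := by
    rw [hvol]
    refine (volume_ball_le_lintegral_upperContactSet hΩ hΩR hcont hv hbdry hz).trans <|
      (setLIntegral_mono' (measurableSet_upperContactSet hΩ hv _) fun x hx ↦ ?_).trans
        (lintegral_mono_set fun x hx ↦ hx.1)
    have htrace : 0 ≤ (-hess n v x).trace := hx.2.2.2.2.trace_nonneg
    rw [ENNReal.rpow_natCast, ENNReal.ofReal_pow htrace, Real.enorm_eq_ofReal_abs]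
    gcongr
    exact (hg x hx).trans (le_abs_self _)
  have hle : v z / (2 * R) * ω ^ (1 / (n : ℝ)) ≤ A := by
    rw [← ENNReal.ofReal_le_coe]
    exact ((ENNReal.le_rpow_inv_iff hn').mpr hint).trans (one_div (n : ℝ) ▸ hA)
  rw [abpConst, ← hω]
  calc v z = 2 / ω ^ (1 / (n : ℝ)) * R * (v z / (2 * R) * ω ^ (1 / (n : ℝ))) := by field_simp
    _ ≤ 2 / ω ^ (1 / (n : ℝ)) * R * A := by gcongr

end ABP

section Subsolution

variable {n : ℕ} {lam Lam : ℝ} {b f u v : ℝ^n → ℝ} {Ω : Set (ℝ^n)} {c c' x z : ℝ^n}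
  {R R' : ℝ}

theorem LpNormE_eq_eLpNorm' {p : ℝ} (hp : 0 ≤ p) (g : ℝ^n → ℝ) (E : Set (ℝ^n)) :
    LpNormE n p g E = eLpNorm' g p (volume.restrict E) := by
  simp only [LpNormE, eLpNorm'_eq_lintegral_enorm, Real.enorm_eq_ofReal_abs,
    ENNReal.ofReal_rpow_of_nonneg (abs_nonneg _) hp]

theorem le_abpConst_mul_of_mul_neg_trace_hess_le (hn : n ≠ 0) (hlam : 0 < lam) (hΩ : IsOpen Ω)
    (hΩR : Ω ⊆ ball c R) (hcont : ContinuousOn v (closure Ω)) (hv : ContDiffOn ℝ 2 v Ω)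
    (hbdry : ∀ x ∈ closure Ω \ Ω, v x ≤ 0) (hz : z ∈ Ω) {g h : ℝ^n → ℝ} {A B : ℝ≥0} {L : ℝ}
    (hL : 0 ≤ L) (hgm : AEMeasurable g (volume.restrict Ω))
    (hhm : AEMeasurable h (volume.restrict Ω))
    (hcontact : ∀ x ∈ upperContactSet v Ω c R (v z / (2 * R)),
      lam * (-hess n v x).trace ≤ g x + L * h x)
    (hg : eLpNorm' g n (volume.restrict Ω) ≤ A) (hh : eLpNorm' h n (volume.restrict Ω) ≤ B) :
    v z ≤ abpConst n * R / lam * (A + L * B) := by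
  lift L to ℝ≥0 using hL
  have hn1 : (1 : ℝ) ≤ n := by exact_mod_cast Nat.one_le_iff_ne_zero.mpr hn
  have hnorm : eLpNorm' (lam⁻¹ • (g + (L : ℝ) • h)) n (volume.restrict Ω) ≤
      (lam.toNNReal⁻¹ * (A + L * B) : ℝ≥0) := by
    rw [eLpNorm'_const_smul _ (by linarith), enorm_inv hlam.ne',
      Real.enorm_of_nonneg hlam.le, ENNReal.coe_mul, ENNReal.coe_inv (by simpa using hlam)]
    gcongr
    · rfl
    refine (eLpNorm'_add_le hgm.aestronglyMeasurable
      (hhm.const_smul (L : ℝ)).aestronglyMeasurable hn1).trans ?_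
    rw [eLpNorm'_const_smul _ (by linarith), ENNReal.coe_add, ENNReal.coe_mul]
    gcongr
    simp
  refine (le_abpConst_mul_of_neg_trace_hess_le hn hΩ hΩR hcont hv hbdry hz (fun x hx ↦ ?_)
    hnorm).trans_eq ?_
  · rw [Pi.smul_apply, smul_eq_mul, ← div_eq_inv_mul, le_div_iff₀' hlam]
    exact hcontact x hx
  · rw [NNReal.coe_mul, NNReal.coe_inv, Real.coe_toNNReal _ hlam.le, div_eq_mul_inv]
    push_cast
    ring

/-- `u` is a classical solution of `𝓜⁺(D²u) + b |Du| ≥ -f` in the open subset `Ω` of the ball of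
center `c` and radius `R`, continuous up to the boundary of `Ω` and nonpositive on the part of it
that lies inside the ball. The coefficients are only assumed measurable. -/
structure IsPucciSubsolution (lam Lam : ℝ) (b f u : ℝ^n → ℝ) (Ω : Set (ℝ^n)) (c : ℝ^n) (R : ℝ) :
    Prop where
  isOpen : IsOpen Ω
  subset_ball : Ω ⊆ ball c R
  aemeasurable_drift : AEMeasurable b (volume.restrict Ω)
  aemeasurable_source : AEMeasurable f (volume.restrict Ω)
  continuousOn : ContinuousOn u (closure Ω)
  contDiffOn : ContDiffOn ℝ 2 u Ω
  nonpos : ∀ x ∈ closure Ω \ Ω, ‖x - c‖ < R → u x ≤ 0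
  neg_le : ∀ x ∈ Ω, -f x ≤ pucciPlus n lam Lam (hess n u x) + b x * gradNorm n u x

namespace IsPucciSubsolution

theorem inter_ball (hu : IsPucciSubsolution lam Lam b f u Ω c R) (h : ball c' R' ⊆ ball c R) :
    IsPucciSubsolution lam Lam b f u (Ω ∩ ball c' R') c' R' where
  isOpen := hu.isOpen.inter isOpen_ball
  subset_ball := inter_subset_right
  aemeasurable_drift := hu.aemeasurable_drift.mono_set inter_subset_left
  aemeasurable_source := hu.aemeasurable_source.mono_set inter_subset_left
  continuousOn := hu.continuousOn.mono (closure_mono inter_subset_left)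
  contDiffOn := hu.contDiffOn.mono inter_subset_left
  nonpos x hx hxR := hu.nonpos x ⟨closure_mono inter_subset_left hx.1,
    fun hxΩ ↦ hx.2 ⟨hxΩ, mem_ball_iff_norm.mpr hxR⟩⟩
    (mem_ball_iff_norm.mp (h (mem_ball_iff_norm.mpr hxR)))
  neg_le x hx := hu.neg_le x hx.1

theorem contDiffAt (hu : IsPucciSubsolution lam Lam b f u Ω c R) (hx : x ∈ Ω) :
    ContDiffAt ℝ 2 u x :=
  hu.contDiffOn.contDiffAt (hu.isOpen.mem_nhds hx)

theorem norm_sub_le_of_mem_closure (hu : IsPucciSubsolution lam Lam b f u Ω c R)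
    (hx : x ∈ closure Ω) : ‖x - c‖ ≤ R :=
  mem_closedBall_iff_norm.mp <|
    closure_minimal (hu.subset_ball.trans ball_subset_closedBall) isClosed_closedBall hx

theorem mul_neg_trace_le (hu : IsPucciSubsolution lam Lam b f u Ω c R)
    (hLam : lam ≤ Lam) (hx : x ∈ Ω) {H X : Matrix (Fin n) (Fin n) ℝ} {s t : ℝ} (hs : 0 < s)
    (hs1 : s ≤ 1) (hhess : s • hess n u x = H + X) (hH : (-H).PosSemidef)
    (hX : ∀ A, IsElliptic lam Lam A → (A * X).trace ≤ t) :
    lam * (-H).trace ≤ max (f x) 0 + |b x| * (s * ‖fderiv ℝ u x‖) + t := by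
  have hpucci := mul_pucciPlus_le_of_smul_eq_add hLam hs hhess hH hX
  have hsource : s * f x ≤ max (f x) 0 :=
    (mul_le_mul_of_nonneg_left (le_max_left _ _) hs.le).trans
      (mul_le_of_le_one_left (le_max_right _ _) hs1)
  have hdrift : b x * (s * ‖fderiv ℝ u x‖) ≤ |b x| * (s * ‖fderiv ℝ u x‖) := by
    gcongr
    exact le_abs_self _
  have hsub := mul_le_mul_of_nonneg_left (hu.neg_le x hx) hs.le
  rw [gradNorm] at hsub
  rw [Matrix.trace_neg]
  linarith

end IsPucciSubsolution

end Subsolution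

section LpNorm

variable {α : Type*} [MeasurableSpace α] {μ : Measure α}

theorem eLpNorm'_restrict_le_mul_measure_rpow {g : α → ℝ} {s t : Set α} {p q : ℝ} (hp : 0 < p)
    (hpq : p ≤ q) (hg : AEMeasurable g (μ.restrict s)) (hst : s ⊆ t) :
    eLpNorm' g p (μ.restrict s) ≤ eLpNorm' g q (μ.restrict s) * μ t ^ (1 / p - 1 / q) := by
  refine (eLpNorm'_le_eLpNorm'_mul_rpow_measure_univ hp hpq hg.aestronglyMeasurable).trans ?_
  rw [Measure.restrict_apply_univ]
  gcongr
  exact sub_nonneg.mpr (one_div_le_one_div_of_le hp hpq)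

theorem volume_ball_rpow {n : ℕ} (hn : n ≠ 0) (c : ℝ^n) {ρ : ℝ} (hρ : 0 < ρ) (q : ℝ) :
    volume (ball c ρ) ^ (1 / (n : ℝ) - 1 / q) = ENNReal.ofReal
      (ρ ^ (1 - n / q) * (volume (ball (0 : ℝ^n) 1)).toReal ^ (1 / (n : ℝ) - 1 / q)) := by
  have hn' : (n : ℝ) ≠ 0 := Nat.cast_ne_zero.mpr hn
  have hω : 0 < (volume (ball (0 : ℝ^n) 1)).toReal :=
    ENNReal.toReal_pos (measure_ball_pos _ _ one_pos).ne' measure_ball_lt_top.ne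
  rw [Measure.addHaar_ball_of_pos volume c hρ, finrank_euclideanSpace_fin,
    ← ENNReal.ofReal_toReal (measure_ball_lt_top (μ := volume) (x := (0 : ℝ^n)) (r := 1)).ne,
    ← ENNReal.ofReal_mul (by positivity), ENNReal.ofReal_rpow_of_pos (by positivity),
    ENNReal.toReal_ofReal hω.le, Real.mul_rpow (by positivity) hω.le, ← Real.rpow_natCast_mul hρ.le]
  congr 3
  field_simp

end LpNorm

section Barrier

variable {n : ℕ} {lam Lam : ℝ} {i : Fin n} {A a ℓ s ρ : ℝ} {c x : ℝ^n}

/-- The barrier of the boundary estimate: the affine function `ℓ * x i` of the distance to the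
hyperplane `x i = 0`, plus a quadratic term that grows away from `c` and on which the Pucci operator
is nonpositive as soon as `A ≥ n * Lam / lam`. -/
noncomputable def quadraticBarrier (i : Fin n) (c : ℝ^n) (A ℓ s : ℝ) (x : ℝ^n) : ℝ :=
  ℓ * x i + s * (‖x - c‖ ^ 2 - A * x i ^ 2)

theorem le_quadraticBarrier (hA : 0 ≤ A) (hs : 0 ≤ s) (hx : 0 ≤ x i) (hxρ : x i ≤ ρ) :
    a * x i + s * ‖x - c‖ ^ 2 ≤ quadraticBarrier i c A (a + A * s * ρ) s x := by
  have : 0 ≤ A * s * (x i * (ρ - x i)) :=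
    mul_nonneg (mul_nonneg hA hs) (mul_nonneg hx (sub_nonneg.mpr hxρ))
  rw [quadraticBarrier]
  linarith

theorem quadraticBarrier_le (hA : 0 ≤ A) (hs : 0 ≤ s) :
    quadraticBarrier i c A ℓ s x ≤ ℓ * x i + s * ‖x - c‖ ^ 2 := by
  have : 0 ≤ s * (A * x i ^ 2) := by positivity
  rw [quadraticBarrier]
  linarith

theorem contDiff_quadraticBarrier : ContDiff ℝ 2 (quadraticBarrier i c A ℓ s) := by
  have hcoord : ContDiff ℝ 2 fun x : ℝ^n ↦ x i := (EuclideanSpace.proj (𝕜 := ℝ) i).contDiff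
  exact (contDiff_const.mul hcoord).add <| contDiff_const.mul <|
    ((contDiff_id.sub contDiff_const).norm_sq ℝ).sub (contDiff_const.mul (hcoord.pow 2))

theorem hasFDerivAt_quadraticBarrier (x : ℝ^n) :
    HasFDerivAt (quadraticBarrier i c A ℓ s) (ℓ • EuclideanSpace.proj (𝕜 := ℝ) i +
      s • (2 • innerSL ℝ (x - c) - A • (2 * x i) • EuclideanSpace.proj (𝕜 := ℝ) i)) x := by
  have hcoord : HasFDerivAt (fun x : ℝ^n ↦ x i) (EuclideanSpace.proj (𝕜 := ℝ) i) x :=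
    (EuclideanSpace.proj (𝕜 := ℝ) i).hasFDerivAt
  have hsq : HasFDerivAt (fun x : ℝ^n ↦ x i ^ 2) ((2 * x i) • EuclideanSpace.proj (𝕜 := ℝ) i) x :=
    (hcoord.pow 2).congr_fderiv (by simp)
  exact (hcoord.const_mul ℓ).add
    (((hasFDerivAt_norm_sub_sq c x).sub (hsq.const_mul A)).const_mul s)

theorem hess_quadraticBarrier : hess n (quadraticBarrier i c A ℓ s) x =
    (2 * s) • (1 - A • Matrix.single i i 1) := by
  have hcoord : HasFDerivAt (fun y : ℝ^n ↦ 2 * y i)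
      ((2 : ℝ) • EuclideanSpace.proj (𝕜 := ℝ) i) x :=
    (EuclideanSpace.proj (𝕜 := ℝ) i).hasFDerivAt.const_mul 2
  have hderiv := (((hasFDerivAt_two_nsmul_innerSL_sub c x).sub ((hcoord.smul_const
    (EuclideanSpace.proj (𝕜 := ℝ) i)).const_smul A)).const_smul s).const_add
      (ℓ • EuclideanSpace.proj (𝕜 := ℝ) i)
  have hsingle (j k : Fin n) : EuclideanSpace.single j (1 : ℝ) i * EuclideanSpace.single k (1 : ℝ) i
      = Matrix.single i i 1 j k := by
    simp only [PiLp.single_apply, Matrix.single_apply, ite_and, mul_ite, mul_one, mul_zero]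
    split_ifs <;> rfl
  ext j k
  rw [hess_apply_of_hasFDerivAt (.of_forall hasFDerivAt_quadraticBarrier) hderiv]
  change s * ((2 • innerSL ℝ : ℝ^n →L[ℝ] ℝ^n →L[ℝ] ℝ) (EuclideanSpace.single j 1)
    (EuclideanSpace.single k 1) - A * (2 * (EuclideanSpace.single j (1 : ℝ) i) *
      EuclideanSpace.single k (1 : ℝ) i)) = 2 * s * (_ - A * _)
  rw [two_nsmul_innerSL_single_single, mul_assoc 2, hsingle]
  ring

theorem norm_fderiv_quadraticBarrier_le (hA : 0 ≤ A) (hℓ : 0 ≤ ℓ) (hs : 0 ≤ s) :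
    ‖fderiv ℝ (quadraticBarrier i c A ℓ s) x‖ ≤ ℓ + 2 * s * (‖x - c‖ + A * |x i|) := by
  have hproj : ‖(EuclideanSpace.proj i : ℝ^n →L[ℝ] ℝ)‖ ≤ 1 :=
    ContinuousLinearMap.opNorm_le_bound _ zero_le_one fun y ↦ by
      simpa using PiLp.norm_apply_le y i
  rw [(hasFDerivAt_quadraticBarrier x).fderiv]
  calc _ ≤ ℓ * ‖(EuclideanSpace.proj i : ℝ^n →L[ℝ] ℝ)‖ + s * (2 * ‖x - c‖ +
        A * (2 * |x i| * ‖(EuclideanSpace.proj i : ℝ^n →L[ℝ] ℝ)‖)) := by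
        refine (norm_add_le _ _).trans (add_le_add ?_ ?_)
        · simp [norm_smul, abs_of_nonneg hℓ]
        · rw [norm_smul, Real.norm_of_nonneg hs]
          gcongr
          refine (norm_sub_le _ _).trans (add_le_add ?_ ?_)
          · exact (norm_two_nsmul_innerSL _).le
          · simp [norm_smul, abs_of_nonneg hA]
    _ ≤ ℓ * 1 + s * (2 * ‖x - c‖ + A * (2 * |x i| * 1)) := by gcongr
    _ = _ := by ring

theorem IsElliptic.trace_mul_hess_quadraticBarrier_nonpos {A' : Matrix (Fin n) (Fin n) ℝ}
    (hA' : IsElliptic lam Lam A') (hlam : 0 < lam) (hLam : lam ≤ Lam) (hs : 0 ≤ s) :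
    (A' * hess n (quadraticBarrier i c (n * Lam / lam) ℓ s) x).trace ≤ 0 := by
  have htrace : (A' * hess n (quadraticBarrier i c (n * Lam / lam) ℓ s) x).trace =
      2 * s * (A'.trace - n * Lam / lam * A' i i) := by
    rw [hess_quadraticBarrier, Matrix.mul_smul, Matrix.mul_sub, Matrix.mul_one, Matrix.mul_smul,
      Matrix.trace_smul, Matrix.trace_sub, Matrix.trace_smul, Matrix.trace_mul_single]
    simp
  have hdiag : n * Lam ≤ n * Lam / lam * A' i i := by
    rw [div_mul_eq_mul_div, le_div_iff₀ hlam]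
    exact mul_le_mul_of_nonneg_left (hA'.le_apply_self i)
      (mul_nonneg n.cast_nonneg (hlam.le.trans hLam))
  rw [htrace]
  exact mul_nonpos_of_nonneg_of_nonpos (by positivity) (by linarith [hA'.trace_le])

end Barrier

section BoundaryEstimate

variable {n : ℕ} {lam Lam q ρ ρ' a t θ W N : ℝ} {K F : ℝ≥0} {b f u v : ℝ^n → ℝ} {Ω : Set (ℝ^n)}
  {i : Fin n} {c z : ℝ^n}

/-- The constant of the Alexandroff–Bakelman–Pucci estimate for the `L^q` norm on a ball of radius
one and an operator with lower ellipticity constant `lam`. -/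
noncomputable def abpConstLq (n : ℕ) (lam q : ℝ) : ℝ :=
  abpConst n * (volume (ball (0 : ℝ^n) 1)).toReal ^ (1 / (n : ℝ) - 1 / q) / lam

theorem abpConstLq_pos (hlam : 0 < lam) : 0 < abpConstLq n lam q :=
  div_pos (mul_pos (abpConst_pos n) <| Real.rpow_pos_of_pos
    (ENNReal.toReal_pos (measure_ball_pos _ _ one_pos).ne' measure_ball_lt_top.ne) _) hlam

theorem le_abpConstLq_mul_of_mul_neg_trace_hess_le (hn : n ≠ 0) (hlam : 0 < lam) (hq : n ≤ q)
    (hΩ : IsOpen Ω) (hΩρ : Ω ⊆ ball c ρ) (hcont : ContinuousOn v (closure Ω))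
    (hv : ContDiffOn ℝ 2 v Ω) (hbdry : ∀ x ∈ closure Ω \ Ω, v x ≤ 0) (hz : z ∈ Ω)
    {g h : ℝ^n → ℝ} {L : ℝ} (hL : 0 ≤ L) (hgm : AEMeasurable g (volume.restrict Ω))
    (hhm : AEMeasurable h (volume.restrict Ω))
    (hcontact : ∀ x ∈ upperContactSet v Ω c ρ (v z / (2 * ρ)),
      lam * (-hess n v x).trace ≤ g x + L * h x)
    (hg : eLpNorm' g q (volume.restrict Ω) ≤ F) (hh : eLpNorm' h q (volume.restrict Ω) ≤ K) :
    v z ≤ abpConstLq n lam q * ρ ^ (1 - n / q) * ρ * (F + L * K) := by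
  have hρ : 0 < ρ := dist_nonneg.trans_lt (hΩρ hz)
  set w := ρ ^ (1 - n / q) * (volume (ball (0 : ℝ^n) 1)).toReal ^ (1 / (n : ℝ) - 1 / q) with hw
  have hw0 : 0 ≤ w := by positivity
  have hHölder {g : ℝ^n → ℝ} {G : ℝ≥0} (hgm : AEMeasurable g (volume.restrict Ω))
      (hg : eLpNorm' g q (volume.restrict Ω) ≤ G) :
      eLpNorm' g n (volume.restrict Ω) ≤ (G * w.toNNReal : ℝ≥0) := by
    refine (eLpNorm'_restrict_le_mul_measure_rpow (by positivity) hq hgm hΩρ).trans ?_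
    rw [volume_ball_rpow hn c hρ, ← hw, ENNReal.coe_mul]
    exact mul_le_mul_left hg _
  refine (le_abpConst_mul_of_mul_neg_trace_hess_le hn hlam hΩ hΩρ hcont hv hbdry hz hL hgm hhm
    hcontact (hHölder hgm hg) (hHölder hhm hh)).trans_eq ?_
  rw [abpConstLq, NNReal.coe_mul, NNReal.coe_mul, Real.coe_toNNReal _ hw0, hw]
  ring

/-- A subsolution in an open subset of the half-ball of radius `ρ` centered at a point `c` of the
hyperplane `x i = 0`, where `K` and `F` bound the `L^q` norms of the drift and of the positive part
of the source. -/
structure IsBoundarySubsolution (lam Lam q : ℝ) (K F : ℝ≥0) (b f u : ℝ^n → ℝ) (Ω : Set (ℝ^n))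
    (i : Fin n) (c : ℝ^n) (ρ : ℝ) : Prop extends IsPucciSubsolution lam Lam b f u Ω c ρ where
  pos : ∀ x ∈ Ω, 0 < x i
  center : c i = 0
  drift_le : eLpNorm' b q (volume.restrict Ω) ≤ K
  source_le : eLpNorm' (fun x ↦ max (f x) 0) q (volume.restrict Ω) ≤ F

namespace IsBoundarySubsolution

theorem inter_ball (hu : IsBoundarySubsolution lam Lam q K F b f u Ω i c ρ) (hq : 0 < q)
    (hρ : ρ' ≤ ρ) : IsBoundarySubsolution lam Lam q K F b f u (Ω ∩ ball c ρ') i c ρ' where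
  toIsPucciSubsolution := hu.toIsPucciSubsolution.inter_ball (ball_subset_ball hρ)
  pos x hx := hu.pos x hx.1
  center := hu.center
  drift_le := (eLpNorm'_mono_measure _ (Measure.restrict_mono_set _ inter_subset_left)
    hq.le).trans hu.drift_le
  source_le := (eLpNorm'_mono_measure _ (Measure.restrict_mono_set _ inter_subset_left)
    hq.le).trans hu.source_le

theorem apply_nonneg_of_mem_closure (hu : IsBoundarySubsolution lam Lam q K F b f u Ω i c ρ)
    (hz : z ∈ closure Ω) : 0 ≤ z i :=
  closure_minimal (t := {x : ℝ^n | 0 ≤ x i}) (fun x hx ↦ (hu.pos x hx).le)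
    (isClosed_le continuous_const (by fun_prop)) hz

theorem abs_apply_le_norm_sub (hu : IsBoundarySubsolution lam Lam q K F b f u Ω i c ρ) (z : ℝ^n) :
    |z i| ≤ ‖z - c‖ := by
  simpa [hu.center] using PiLp.norm_apply_le (z - c) i

theorem le_quadraticBarrier_of_mem_closure_diff {A s : ℝ}
    (hu : IsBoundarySubsolution lam Lam q K F b f u Ω i c ρ) (hA : 0 ≤ A) (ha : 0 ≤ a)
    (hs : 0 ≤ s) (hle : ∀ x ∈ Ω, u x ≤ a * x i + s * ρ ^ 2) (hz : z ∈ closure Ω \ Ω) :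
    u z ≤ quadraticBarrier i c A (a + A * s * ρ) s z := by
  have hzi := hu.apply_nonneg_of_mem_closure hz.1
  have hzρ := hu.norm_sub_le_of_mem_closure hz.1
  refine le_trans ?_ (le_quadraticBarrier hA hs hzi
    ((le_abs_self _).trans ((hu.abs_apply_le_norm_sub z).trans hzρ)))
  rcases hzρ.lt_or_eq with hzρ | hzρ
  · exact (hu.nonpos z hz hzρ).trans (by positivity)
  · rw [hzρ]
    exact le_on_closure hle hu.continuousOn (by fun_prop) hz.1

theorem mul_neg_trace_hess_sub_quadraticBarrier_le {ℓ s m T : ℝ}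
    (hu : IsBoundarySubsolution lam Lam q K F b f u Ω i c ρ) (hlam : 0 < lam) (hLam : lam ≤ Lam)
    (hℓ : 0 ≤ ℓ) (hs : 0 ≤ s) (hT : ℓ + 2 * s * (1 + n * Lam / lam) * ρ ≤ T)
    (hz : z ∈ upperContactSet (u - quadraticBarrier i c (n * Lam / lam) ℓ s) Ω c ρ m) :
    lam * (-hess n (u - quadraticBarrier i c (n * Lam / lam) ℓ s) z).trace ≤
      max (f z) 0 + (m + T) * |b z| := by
  obtain ⟨hzΩ, -, hgrad, -, hconcave⟩ := hz
  have hA : 0 ≤ n * Lam / lam :=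
    div_nonneg (mul_nonneg n.cast_nonneg (hlam.le.trans hLam)) hlam.le
  have huz : ContDiffAt ℝ 2 u z := hu.contDiffAt hzΩ
  have hPz : ContDiffAt ℝ 2 (quadraticBarrier i c (n * Lam / lam) ℓ s) z :=
    contDiff_quadraticBarrier.contDiffAt
  have htrace := hu.mul_neg_trace_le hLam hzΩ one_pos le_rfl
    (X := hess n (quadraticBarrier i c (n * Lam / lam) ℓ s) z) (t := 0)
    (by rw [one_smul, hess_sub huz hPz, sub_add_cancel]) hconcave
    fun A hA ↦ hA.trace_mul_hess_quadraticBarrier_nonpos hlam hLam hs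
  have hfderiv : ‖fderiv ℝ u z‖ ≤ m + T := by
    have hP := norm_fderiv_quadraticBarrier_le (i := i) (c := c) (x := z) hA hℓ hs
    have hzc : ‖z - c‖ ≤ ρ := hu.norm_sub_le_of_mem_closure (subset_closure hzΩ)
    rw [fderiv_sub (huz.differentiableAt two_ne_zero) (hPz.differentiableAt two_ne_zero)] at hgrad
    calc ‖fderiv ℝ u z‖ ≤ m + (ℓ + 2 * s * (‖z - c‖ + n * Lam / lam * |z i|)) := by
          linarith [norm_le_norm_sub_add (fderiv ℝ u z)
            (fderiv ℝ (quadraticBarrier i c (n * Lam / lam) ℓ s) z)]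
      _ ≤ m + (ℓ + 2 * s * (ρ + n * Lam / lam * ρ)) := by
          gcongr
          exact (hu.abs_apply_le_norm_sub z).trans hzc
      _ ≤ m + T := by linarith
  calc _ ≤ _ := htrace
    _ ≤ max (f z) 0 + |b z| * (m + T) := by
      rw [one_mul, add_zero]
      gcongr
    _ = _ := by ring

theorem le_quadraticBarrier_add {ℓ s T : ℝ}
    (hu : IsBoundarySubsolution lam Lam q K F b f u Ω i c ρ) (hlam : 0 < lam) (hLam : lam ≤ Lam)
    (hq : n ≤ q) (hK : abpConstLq n lam q * ρ ^ (1 - n / q) * K ≤ 1) (hℓ : 0 ≤ ℓ) (hs : 0 ≤ s)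
    (hT : ℓ + 2 * s * (1 + n * Lam / lam) * ρ ≤ T)
    (hbdry : ∀ x ∈ closure Ω \ Ω, u x ≤ quadraticBarrier i c (n * Lam / lam) ℓ s x)
    (hz : z ∈ Ω) :
    u z ≤ quadraticBarrier i c (n * Lam / lam) ℓ s z +
      2 * abpConstLq n lam q * ρ ^ (1 - n / q) * ρ * (F + T * K) := by
  have hρ : 0 < ρ := dist_nonneg.trans_lt (hu.subset_ball hz)
  have hκ : 0 < abpConstLq n lam q := abpConstLq_pos hlam
  have hA : 0 ≤ n * Lam / lam :=
    div_nonneg (mul_nonneg n.cast_nonneg (hlam.le.trans hLam)) hlam.le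
  have hT0 : 0 ≤ T := le_trans (by positivity) hT
  set v := u - quadraticBarrier i c (n * Lam / lam) ℓ s
  suffices v z ≤ 2 * abpConstLq n lam q * ρ ^ (1 - n / q) * ρ * (F + T * K) by
    rwa [← sub_le_iff_le_add']
  rcases le_or_gt (v z) 0 with hvz | hvz
  · exact hvz.trans (by positivity)
  have habp := le_abpConstLq_mul_of_mul_neg_trace_hess_le (Fin.pos i).ne' hlam hq hu.isOpen
    hu.subset_ball (hu.continuousOn.sub contDiff_quadraticBarrier.continuous.continuousOn)
    (hu.contDiffOn.sub contDiff_quadraticBarrier.contDiffOn)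
    (fun x hx ↦ sub_nonpos.mpr (hbdry x hx)) hz (L := v z / (2 * ρ) + T) (by positivity)
    (hu.aemeasurable_source.max aemeasurable_const) hu.aemeasurable_drift.abs
    (fun x hx ↦ hu.mul_neg_trace_hess_sub_quadraticBarrier_le hlam hLam hℓ hs hT hx) hu.source_le
    ((eLpNorm'_norm (f := b)).trans_le hu.drift_le)
  have habsorb : abpConstLq n lam q * ρ ^ (1 - n / q) * ρ * (v z / (2 * ρ) * K) ≤ v z / 2 := by
    calc _ = abpConstLq n lam q * ρ ^ (1 - n / q) * K * (v z / 2) := by field_simp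
      _ ≤ v z / 2 := mul_le_of_le_one_left (by positivity) hK
  linarith

theorem improve_of_le (hu : IsBoundarySubsolution lam Lam q K F b f u Ω i c ρ) (hlam : 0 < lam)
    (hLam : lam ≤ Lam) (hq : n ≤ q) (hK : abpConstLq n lam q * ρ ^ (1 - n / q) * K ≤ 1)
    (ha : 0 ≤ a) (ht : 0 ≤ t)
    (hsmall : 32 * abpConstLq n lam q * ρ ^ (1 - n / q) *
      (F + (a + (2 + 3 * (n * Lam / lam)) * t) * K) ≤ t)
    (hle : ∀ x ∈ Ω, u x ≤ a * x i + t * ρ) (hz : z ∈ Ω) (hzρ : ‖z - c‖ ≤ ρ / 4) :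
    u z ≤ (a + n * Lam / lam * t) * z i + t * ρ / 8 := by
  have hρ : 0 < ρ := dist_nonneg.trans_lt (hu.subset_ball hz)
  have hA : 0 ≤ n * Lam / lam :=
    div_nonneg (mul_nonneg n.cast_nonneg (hlam.le.trans hLam)) hlam.le
  have hbdry (x) (hx : x ∈ closure Ω \ Ω) :
      u x ≤ quadraticBarrier i c (n * Lam / lam) (a + n * Lam / lam * t) (t / ρ) x := by
    have := hu.le_quadraticBarrier_of_mem_closure_diff hA ha (s := t / ρ) (by positivity)
      (fun x hx ↦ (hle x hx).trans_eq (by field_simp)) hx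
    rwa [mul_assoc, div_mul_cancel₀ t hρ.ne'] at this
  have hstep := hu.le_quadraticBarrier_add hlam hLam hq hK
    (T := a + (2 + 3 * (n * Lam / lam)) * t) (by positivity)
    (div_nonneg ht hρ.le) (le_of_eq (by field_simp; ring)) hbdry hz
  have hquad : t / ρ * ‖z - c‖ ^ 2 ≤ t * ρ / 16 := by
    calc t / ρ * ‖z - c‖ ^ 2 ≤ t / ρ * (ρ / 4) ^ 2 := by gcongr
      _ = t * ρ / 16 := by field_simp; norm_num
  have hbarrier := quadraticBarrier_le (i := i) (c := c) (x := z) (ℓ := a + n * Lam / lam * t) hA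
    (div_nonneg ht hρ.le)
  linarith [mul_le_mul_of_nonneg_right hsmall hρ.le]

end IsBoundarySubsolution

theorem rpow_mul_pow_le_of_rpow_le {x : ℝ} {α : ℝ} (hρ : 0 ≤ ρ) (hx : 0 ≤ x) (hxθ : x ^ α ≤ θ)
    (k : ℕ) : (ρ * x ^ k) ^ α ≤ ρ ^ α * θ ^ k := by
  rw [Real.mul_rpow hρ (pow_nonneg hx k), ← Real.rpow_natCast_mul hx, mul_comm (k : ℝ),
    Real.rpow_mul_natCast hx]
  gcongr

theorem mul_drift_le_one {κ y y' A K : ℝ} (hκ : 0 ≤ κ) (hA : 0 ≤ A) (hW : 0 ≤ W) (hK : 0 ≤ K)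
    (hy : 0 ≤ y) (hy' : y' ≤ y) (hρ : 32 * κ * (1 + (W + (2 + 3 * A)) * K) * y ≤ 1) :
    κ * y' * K ≤ 1 := by
  refine le_trans ?_ hρ
  calc κ * y' * K ≤ κ * y * K := by gcongr
    _ = 1 * κ * (0 + (0 + (1 + 3 * 0)) * K) * y := by ring
    _ ≤ 32 * κ * (1 + (W + (2 + 3 * A)) * K) * y := by gcongr <;> norm_num

theorem mul_source_add_drift_le {κ y A K F : ℝ} {k : ℕ} (hκ : 0 ≤ κ) (hA : 0 ≤ A) (hW : 0 ≤ W)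
    (hK : 0 ≤ K) (hθ : 0 ≤ θ) (hθ1 : θ ≤ 1) (hρ0 : 0 < ρ) (hρ1 : ρ ≤ 1) (hFN : F ≤ N)
    (hN : 0 ≤ N) (hρ : 32 * κ * (1 + (W + (2 + 3 * A)) * K) * y ≤ 1) (hy : 0 ≤ y) :
    32 * κ * (y * θ ^ k) * (F + (N / ρ * (W * (1 - θ ^ k)) + (2 + 3 * A) * (N / ρ * θ ^ k)) * K) ≤
      N / ρ * θ ^ k := by
  have hθk : θ ^ k ≤ 1 := pow_le_one₀ hθ hθ1
  have hθk0 : 0 ≤ θ ^ k := pow_nonneg hθ k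
  have hFρ : F ≤ N / ρ := hFN.trans (le_div_self hN hρ0 hρ1)
  calc _ ≤ 32 * κ * (y * θ ^ k) * (N / ρ + (N / ρ * (W * 1) + (2 + 3 * A) * (N / ρ * 1)) * K) := by
        gcongr
        linarith
    _ = 32 * κ * (1 + (W + (2 + 3 * A)) * K) * y * (N / ρ * θ ^ k) := by ring
    _ ≤ N / ρ * θ ^ k := mul_le_of_le_one_left (by positivity) hρ

namespace IsBoundarySubsolution

theorem le_geometric (hu : IsBoundarySubsolution lam Lam q K F b f u Ω i c ρ) (hlam : 0 < lam)
    (hLam : lam ≤ Lam) (hq : n < q) (hθ : 1 / 2 ≤ θ) (hθ1 : θ ≤ 1)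
    (hθq : (1 / 4 : ℝ) ^ (1 - n / q) ≤ θ) (hW : 0 ≤ W) (hWθ : W * (1 - θ) = n * Lam / lam)
    (hρ0 : 0 < ρ) (hρ1 : ρ ≤ 1)
    (hρ : 32 * abpConstLq n lam q * (1 + (W + (2 + 3 * (n * Lam / lam))) * K) *
      ρ ^ (1 - n / q) ≤ 1)
    (hF : F ≤ N) (hN : ∀ x ∈ Ω, u x ≤ N) (k : ℕ) (hz : z ∈ Ω) (hzk : ‖z - c‖ ≤ ρ * (1 / 4) ^ k) :
    u z ≤ N / ρ * (W * (1 - θ ^ k)) * z i + N / ρ * θ ^ k * (ρ * (1 / 4) ^ k) := by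
  have hN0 : 0 ≤ N := F.coe_nonneg.trans hF
  have hκ : 0 < abpConstLq n lam q := abpConstLq_pos hlam
  have hA : 0 ≤ n * Lam / lam :=
    div_nonneg (mul_nonneg n.cast_nonneg (hlam.le.trans hLam)) hlam.le
  induction k generalizing z with
  | zero => simpa [hρ0.ne', mul_comm N, div_mul_cancel₀] using hN z hz
  | succ k ih =>
    -- The factor `(ρ / 4 ^ k) ^ (1 - n / q)` makes the error decay at least as fast as the slope
    -- increments `N / ρ * θ ^ k`, whose sum stays bounded.
    have hθk1 : θ ^ k ≤ 1 := pow_le_one₀ (by linarith) hθ1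
    have hρk := rpow_mul_pow_le_of_rpow_le hρ0.le (by norm_num) hθq k
    have hsmall := mul_source_add_drift_le (k := k) hκ.le hA hW K.coe_nonneg (by linarith) hθ1 hρ0
      hρ1 hF hN0 hρ (by positivity)
    have hdrift : abpConstLq n lam q * (ρ * (1 / 4) ^ k) ^ (1 - n / q) * K ≤ 1 :=
      mul_drift_le_one hκ.le hA hW K.coe_nonneg (by positivity)
        (hρk.trans (mul_le_of_le_one_right (by positivity) hθk1)) hρ
    have hzk' : ‖z - c‖ ≤ ρ * (1 / 4) ^ k / 4 := by
      rw [pow_succ] at hzk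
      linarith
    have hρk0 : 0 < ρ * (1 / 4) ^ k := by positivity
    have himprove := (hu.inter_ball (ρ' := ρ * (1 / 4) ^ k) (n.cast_nonneg.trans_lt hq)
      (mul_le_of_le_one_right hρ0.le (pow_le_one₀ (by norm_num) (by norm_num)))).improve_of_le
      hlam hLam hq.le hdrift (by have := sub_nonneg.mpr hθk1; positivity) (by positivity)
      (le_trans (by gcongr) hsmall) (fun x hx ↦ ih hx.1 (mem_ball_iff_norm.mp hx.2).le)
      ⟨hz, mem_ball_iff_norm.mpr (by linarith)⟩ hzk'
    have hslope : N / ρ * (W * (1 - θ ^ k)) + n * Lam / lam * (N / ρ * θ ^ k) =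
        N / ρ * (W * (1 - θ ^ (k + 1))) := by
      rw [← hWθ]
      ring
    have hdecay : 0 ≤ N / ρ * θ ^ k * (ρ * (1 / 4) ^ k) / 4 * (θ - 1 / 2) :=
      mul_nonneg (by positivity) (sub_nonneg.mpr hθ)
    rw [hslope] at himprove
    rw [pow_succ, pow_succ] at *
    linarith

theorem le_mul_norm_sub (hu : IsBoundarySubsolution lam Lam q K F b f u Ω i c ρ) (hlam : 0 < lam)
    (hLam : lam ≤ Lam) (hq : n < q) (hθ : 1 / 2 ≤ θ) (hθ1 : θ < 1)
    (hθq : (1 / 4 : ℝ) ^ (1 - n / q) ≤ θ) (hW : 0 ≤ W) (hWθ : W * (1 - θ) = n * Lam / lam)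
    (hρ0 : 0 < ρ) (hρ1 : ρ ≤ 1)
    (hρ : 32 * abpConstLq n lam q * (1 + (W + (2 + 3 * (n * Lam / lam))) * K) *
      ρ ^ (1 - n / q) ≤ 1)
    (hF : F ≤ N) (hN : ∀ x ∈ Ω, u x ≤ N) (hz : z ∈ Ω) :
    u z ≤ N / ρ * (W + 4) * ‖z - c‖ := by
  have hN0 : 0 ≤ N / ρ := div_nonneg (F.coe_nonneg.trans hF) hρ0.le
  have hzi : 0 < z i := hu.pos z hz
  have hzc : z i ≤ ‖z - c‖ := (le_abs_self _).trans (hu.abs_apply_le_norm_sub z)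
  obtain ⟨k, hk, hk'⟩ := exists_nat_pow_near_of_lt_one (x := ‖z - c‖ / ρ) (y := 1 / 4)
    (div_pos (hzi.trans_le hzc) hρ0)
    ((div_le_one hρ0).mpr (hu.norm_sub_le_of_mem_closure (subset_closure hz)))
    (by norm_num) (by norm_num)
  rw [lt_div_iff₀' hρ0, pow_succ] at hk
  rw [div_le_iff₀' hρ0] at hk'
  have hθk0 : 0 ≤ θ ^ k := pow_nonneg (by linarith) k
  calc u z ≤ N / ρ * (W * (1 - θ ^ k)) * z i + N / ρ * θ ^ k * (ρ * (1 / 4) ^ k) :=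
        hu.le_geometric hlam hLam hq hθ hθ1.le hθq hW hWθ hρ0 hρ1 hρ hF hN k hz hk'
    _ ≤ N / ρ * (W * 1) * ‖z - c‖ + N / ρ * 1 * (4 * ‖z - c‖) := by
        gcongr N / ρ * (W * ?_) * ?_ + N / ρ * ?_ * ?_
        · linarith
        · exact pow_le_one₀ (by linarith) hθ1.le
        · linarith
    _ = N / ρ * (W + 4) * ‖z - c‖ := by ring

end IsBoundarySubsolution

theorem exists_pos_le_mul_rpow_le_one {α d : ℝ} (hα : 0 < α) (hd : 0 < d) (C : ℝ) :
    ∃ ρ, 0 < ρ ∧ ρ ≤ d ∧ C * ρ ^ α ≤ 1 := by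
  have hlim : Tendsto (fun ρ : ℝ ↦ C * ρ ^ α) (𝓝[>] 0) (𝓝 0) := by
    simpa [hα.ne'] using ((Real.continuousAt_rpow_const 0 α (.inr hα.le)).tendsto.mono_left
      nhdsWithin_le_nhds).const_mul C
  obtain ⟨ρ, hρ, hρd⟩ := ((hlim.eventually_le_const one_pos).and
    (Ioc_mem_nhdsGT hd)).exists
  exact ⟨ρ, hρd.1, hρd.2, hρ⟩

theorem exists_forall_isBoundarySubsolution_le_mul_norm_sub {d : ℝ} (n : ℕ) (hlam : 0 < lam)
    (hLam : lam ≤ Lam) (hq : n < q) (K : ℝ≥0) (hd : 0 < d) :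
    ∃ ρ C, 0 < ρ ∧ ρ ≤ d ∧ 0 < C ∧ ∀ b f u Ω (i : Fin n) c (F : ℝ≥0),
      IsBoundarySubsolution lam Lam q K F b f u Ω i c ρ → ∀ N : ℝ, F ≤ N → (∀ x ∈ Ω, u x ≤ N) →
        ∀ x ∈ Ω, u x ≤ C * N * ‖x - c‖ := by
  have hα : 0 < 1 - n / q := sub_pos.mpr ((div_lt_one (n.cast_nonneg.trans_lt hq)).mpr hq)
  obtain ⟨θ, hθ, hθ1⟩ : ∃ θ : ℝ, max (1 / 2) ((1 / 4) ^ (1 - n / q)) ≤ θ ∧ θ < 1 :=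
    ⟨_, le_rfl, max_lt (by norm_num) (Real.rpow_lt_one (by norm_num) (by norm_num) hα)⟩
  have hW : 0 ≤ n * Lam / lam / (1 - θ) :=
    div_nonneg (div_nonneg (mul_nonneg n.cast_nonneg (hlam.le.trans hLam)) hlam.le)
      (sub_nonneg.mpr hθ1.le)
  set W := n * Lam / lam / (1 - θ)
  obtain ⟨ρ, hρ0, hρd, hρ⟩ := exists_pos_le_mul_rpow_le_one hα (lt_min hd one_pos)
    (32 * abpConstLq n lam q * (1 + (W + (2 + 3 * (n * Lam / lam))) * K))
  refine ⟨ρ, (W + 4) / ρ, hρ0, hρd.trans (min_le_left _ _), by positivity,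
    fun b f u Ω i c F hu N hF hN x hx ↦ ?_⟩
  refine (hu.le_mul_norm_sub hlam hLam hq (le_of_max_le_left hθ) hθ1 (le_of_max_le_right hθ) hW
    (div_mul_cancel₀ _ (sub_pos.mpr hθ1).ne') hρ0 (hρd.trans (min_le_right _ _)) hρ hF hN
    hx).trans_eq ?_
  ring

end BoundaryEstimate

section Cutoff

variable {n m : ℕ} {c x : ℝ^n} {R : ℝ}

/-- A concave paraboloid vanishing on the sphere of center `c` and radius `R`, whose powers serve as
cutoff functions on the ball. -/
noncomputable def cutoff (c : ℝ^n) (R : ℝ) (x : ℝ^n) : ℝ :=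
  1 - ‖x - c‖ ^ 2 / R ^ 2

theorem cutoff_le_one : cutoff c R x ≤ 1 :=
  sub_le_self _ (by positivity)

theorem cutoff_le (hR : 0 < R) : cutoff c R x ≤ 2 / R * (R - ‖x - c‖) := by
  have : cutoff c R x = 2 / R * (R - ‖x - c‖) - ((R - ‖x - c‖) / R) ^ 2 := by
    rw [cutoff]
    field_simp
    ring
  linarith [sq_nonneg ((R - ‖x - c‖) / R)]

theorem one_sub_sq_div_sq_le_cutoff {R' : ℝ} (hx : ‖x - c‖ ≤ R') :
    1 - R' ^ 2 / R ^ 2 ≤ cutoff c R x := by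
  rw [cutoff]
  gcongr

theorem cutoff_eq_zero (hR : 0 < R) (hx : ‖x - c‖ = R) : cutoff c R x = 0 := by
  rw [cutoff, hx, div_self (pow_ne_zero 2 hR.ne'), sub_self]

theorem cutoff_pos (hx : x ∈ ball c R) : 0 < cutoff c R x := by
  rw [mem_ball_iff_norm] at hx
  rw [cutoff, sub_pos, ← div_pow]
  exact pow_lt_one₀ (div_nonneg (norm_nonneg _) ((norm_nonneg _).trans hx.le))
    ((div_lt_one ((norm_nonneg _).trans_lt hx)).mpr hx) two_ne_zero

theorem contDiff_cutoff : ContDiff ℝ 2 (cutoff c R) :=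
  contDiff_const.sub (((contDiff_id.sub contDiff_const).norm_sq ℝ).div_const _)

theorem contDiff_cutoff_pow (k : ℕ) : ContDiff ℝ 2 (cutoff c R ^ k) :=
  contDiff_cutoff.pow k

theorem hasFDerivAt_cutoff (x : ℝ^n) :
    HasFDerivAt (cutoff c R) (-((R ^ 2)⁻¹ • 2 • innerSL ℝ (x - c))) x :=
  (((hasFDerivAt_norm_sub_sq c x).const_mul (R ^ 2)⁻¹).const_sub 1).congr_of_eventuallyEq
    (.of_forall fun y ↦ by rw [cutoff, div_eq_inv_mul])

theorem norm_fderiv_cutoff_le (hx : x ∈ ball c R) : ‖fderiv ℝ (cutoff c R) x‖ ≤ 2 / R := by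
  rw [mem_ball_iff_norm] at hx
  have hR : 0 < R := (norm_nonneg _).trans_lt hx
  rw [(hasFDerivAt_cutoff x).fderiv, norm_neg, norm_smul, Real.norm_of_nonneg (by positivity),
    norm_two_nsmul_innerSL]
  calc (R ^ 2)⁻¹ * (2 * ‖x - c‖) ≤ (R ^ 2)⁻¹ * (2 * R) := by gcongr
    _ = 2 / R := by field_simp

theorem hess_cutoff : hess n (cutoff c R) x = (-(2 / R ^ 2)) • 1 := by
  ext j k
  rw [hess_apply_of_hasFDerivAt (.of_forall hasFDerivAt_cutoff)
    ((hasFDerivAt_two_nsmul_innerSL_sub c x).const_smul (R ^ 2)⁻¹).neg]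
  change -((R ^ 2)⁻¹ * (2 • innerSL ℝ : ℝ^n →L[ℝ] ℝ^n →L[ℝ] ℝ) (EuclideanSpace.single j 1)
    (EuclideanSpace.single k 1)) = _
  rw [two_nsmul_innerSL_single_single, Matrix.smul_apply, smul_eq_mul]
  ring

theorem abs_apply_single_le_norm (L : ℝ^n →L[ℝ] ℝ) (i : Fin n) :
    |L (EuclideanSpace.single i 1)| ≤ ‖L‖ := by
  simpa using L.le_opNorm (EuclideanSpace.single i 1)

theorem norm_fderiv_cutoff_pow_le (hx : x ∈ ball c R) :
    ‖fderiv ℝ (cutoff c R ^ (m + 2)) x‖ ≤ 2 / R * (m + 2) * cutoff c R x ^ (m + 1) := by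
  have hσ := (cutoff_pos hx).le
  have hpow : HasFDerivAt (cutoff c R ^ (m + 2))
      (((m + 2 : ℕ) * cutoff c R x ^ (m + 1)) • fderiv ℝ (cutoff c R) x) x :=
    ((contDiff_cutoff.differentiable two_ne_zero x).hasFDerivAt.pow (m + 2)).congr_fderiv
      (by rw [nsmul_eq_mul]; rfl)
  rw [hpow.fderiv, norm_smul, Real.norm_of_nonneg (by positivity)]
  calc _ ≤ ((m + 2 : ℕ) * cutoff c R x ^ (m + 1)) * (2 / R) :=
        mul_le_mul_of_nonneg_left (norm_fderiv_cutoff_le hx) (by positivity)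
    _ = _ := by
        push_cast
        ring

theorem abs_hess_cutoff_pow_le (hx : x ∈ ball c R) (i j : Fin n) :
    |hess n (cutoff c R ^ (m + 2)) x i j| ≤ 4 / R ^ 2 * (m + 2) ^ 2 * cutoff c R x ^ m := by
  have hσ := (cutoff_pos hx).le
  have hσ1 : cutoff c R x ^ (m + 1) ≤ cutoff c R x ^ m :=
    pow_le_pow_of_le_one hσ cutoff_le_one m.le_succ
  have hR : 0 ≤ 2 / R := (norm_nonneg _).trans (norm_fderiv_cutoff_le hx)
  have hgrad (i : Fin n) : |fderiv ℝ (cutoff c R) x (EuclideanSpace.single i 1)| ≤ 2 / R :=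
    (abs_apply_single_le_norm _ i).trans (norm_fderiv_cutoff_le hx)
  have hone : |-(2 / R ^ 2) * (1 : Matrix (Fin n) (Fin n) ℝ) i j| ≤ 2 / R ^ 2 := by
    rw [Matrix.one_apply, abs_mul, abs_neg, abs_of_nonneg (by positivity)]
    split_ifs
    · rw [abs_one, mul_one]
    · rw [abs_zero, mul_zero]
      positivity
  rw [hess_pow_add_two_apply contDiff_cutoff.contDiffAt, hess_cutoff, Matrix.smul_apply,
    smul_eq_mul]
  calc _ ≤ (m + 2) * cutoff c R x ^ (m + 1) * (2 / R ^ 2) +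
        (m + 2) * (m + 1) * cutoff c R x ^ m * ((2 / R) * (2 / R)) := by
        refine (abs_add_le _ _).trans (add_le_add ?_ ?_)
        · rw [abs_mul, abs_of_nonneg (by positivity)]
          exact mul_le_mul_of_nonneg_left hone (by positivity)
        · rw [mul_assoc, abs_mul, abs_mul (fderiv ℝ _ _ _), abs_of_nonneg (by positivity)]
          exact mul_le_mul_of_nonneg_left (mul_le_mul (hgrad i) (hgrad j) (abs_nonneg _) hR)
            (by positivity)
    _ ≤ (m + 2) * cutoff c R x ^ m * (2 / R ^ 2) +
        (m + 2) * (m + 1) * cutoff c R x ^ m * ((2 / R) * (2 / R)) := by gcongr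
    _ = 4 / R ^ 2 * (m + 2) ^ 2 * cutoff c R x ^ m -
        (m + 2) * (2 / R ^ 2) * cutoff c R x ^ m := by ring
    _ ≤ _ := sub_le_self _ (by positivity)

end Cutoff

section LocalMaximum

variable {n m : ℕ} {lam Lam M R s : ℝ} {b f u : ℝ^n → ℝ} {Ω : Set (ℝ^n)} {c x : ℝ^n}

/-- The constant in front of the lower order terms produced by multiplying a subsolution by the
power `m + 2` of the cutoff function of a ball of radius `R`. -/
noncomputable def cutoffConst (n : ℕ) (Lam R : ℝ) (m : ℕ) : ℝ :=
  2 / R * (m + 3) + n ^ 2 * Lam * (12 / R ^ 2 * (m + 3) ^ 2)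

theorem cutoffConst_pos (hLam : 0 ≤ Lam) (hR : 0 < R) : 0 < cutoffConst n Lam R m := by
  rw [cutoffConst]
  positivity

namespace IsPucciSubsolution

theorem pos_of_mem_upperContactSet (hu : IsPucciSubsolution lam Lam b f u Ω c R)
    (hx : x ∈ upperContactSet (cutoff c R ^ (m + 2) * u) Ω c R M) : 0 < u x :=
  (pos_iff_pos_of_mul_pos hx.2.1).mp (pow_pos (cutoff_pos (hu.subset_ball hx.1)) _)

theorem norm_fderiv_cutoff_pow_mul_le (hu : IsPucciSubsolution lam Lam b f u Ω c R)
    (hx : x ∈ upperContactSet (cutoff c R ^ (m + 2) * u) Ω c R M) :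
    ‖fderiv ℝ (cutoff c R ^ (m + 2) * u) x‖ ≤ 2 / R * (cutoff c R x ^ (m + 1) * u x) := by
  have hxR := hu.subset_ball hx.1
  have hR : 0 < R := dist_nonneg.trans_lt hxR
  refine le_of_mul_le_mul_left ?_ (cutoff_pos hxR)
  calc cutoff c R x * ‖fderiv ℝ (cutoff c R ^ (m + 2) * u) x‖
      ≤ 2 / R * (R - ‖x - c‖) * ‖fderiv ℝ (cutoff c R ^ (m + 2) * u) x‖ := by
        gcongr
        exact cutoff_le hR
    _ = 2 / R * (‖fderiv ℝ (cutoff c R ^ (m + 2) * u) x‖ * (R - ‖x - c‖)) := by ring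
    _ ≤ 2 / R * (cutoff c R x ^ (m + 2) * u x) :=
        mul_le_mul_of_nonneg_left hx.2.2.2.1 (by positivity)
    _ = cutoff c R x * (2 / R * (cutoff c R x ^ (m + 1) * u x)) := by ring

theorem cutoff_mul_norm_fderiv_le (hu : IsPucciSubsolution lam Lam b f u Ω c R)
    (hx : x ∈ upperContactSet (cutoff c R ^ (m + 2) * u) Ω c R M) :
    cutoff c R x * ‖fderiv ℝ u x‖ ≤ 2 / R * (m + 3) * u x := by
  have hux := hu.pos_of_mem_upperContactSet hx
  have hσ := cutoff_pos (hu.subset_ball hx.1)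
  have hprod := fderiv_mul ((contDiff_cutoff_pow (c := c) (R := R) (m + 2)).differentiable
    two_ne_zero x) ((hu.contDiffAt hx.1).differentiableAt two_ne_zero)
  have hsmul : cutoff c R x ^ (m + 2) • fderiv ℝ u x =
      fderiv ℝ (cutoff c R ^ (m + 2) * u) x - u x • fderiv ℝ (cutoff c R ^ (m + 2)) x :=
    eq_sub_of_add_eq hprod.symm
  refine le_of_mul_le_mul_left ?_ (pow_pos hσ (m + 1))
  calc cutoff c R x ^ (m + 1) * (cutoff c R x * ‖fderiv ℝ u x‖)
      = ‖cutoff c R x ^ (m + 2) • fderiv ℝ u x‖ := by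
        rw [norm_smul, Real.norm_of_nonneg (by positivity)]
        ring
    _ ≤ ‖fderiv ℝ (cutoff c R ^ (m + 2) * u) x‖ +
        u x * ‖fderiv ℝ (cutoff c R ^ (m + 2)) x‖ := by
        rw [hsmul]
        refine (norm_sub_le _ _).trans_eq ?_
        rw [norm_smul, Real.norm_of_nonneg hux.le]
    _ ≤ 2 / R * (cutoff c R x ^ (m + 1) * u x) +
        u x * (2 / R * (m + 2) * cutoff c R x ^ (m + 1)) := by
        gcongr
        · exact hu.norm_fderiv_cutoff_pow_mul_le hx
        · exact norm_fderiv_cutoff_pow_le (hu.subset_ball hx.1)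
    _ = _ := by ring

theorem abs_fderiv_cutoff_pow_apply_mul_fderiv_apply_le
    (hu : IsPucciSubsolution lam Lam b f u Ω c R)
    (hx : x ∈ upperContactSet (cutoff c R ^ (m + 2) * u) Ω c R M) (i j : Fin n) :
    |fderiv ℝ (cutoff c R ^ (m + 2)) x (EuclideanSpace.single i 1) *
      fderiv ℝ u x (EuclideanSpace.single j 1)| ≤
        4 / R ^ 2 * ((m + 2) * (m + 3)) * (cutoff c R x ^ m * u x) := by
  have hxR := hu.subset_ball hx.1
  have hσ := cutoff_pos hxR
  have hR : 0 < R := dist_nonneg.trans_lt hxR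
  calc _ ≤ ‖fderiv ℝ (cutoff c R ^ (m + 2)) x‖ * ‖fderiv ℝ u x‖ := by
        rw [abs_mul]
        exact mul_le_mul (abs_apply_single_le_norm _ i) (abs_apply_single_le_norm _ j)
          (abs_nonneg _) (norm_nonneg _)
    _ ≤ 2 / R * (m + 2) * cutoff c R x ^ (m + 1) * ‖fderiv ℝ u x‖ := by
        gcongr
        exact norm_fderiv_cutoff_pow_le hxR
    _ = 2 / R * (m + 2) * cutoff c R x ^ m * (cutoff c R x * ‖fderiv ℝ u x‖) := by ring
    _ ≤ 2 / R * (m + 2) * cutoff c R x ^ m * (2 / R * (m + 3) * u x) :=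
        mul_le_mul_of_nonneg_left (hu.cutoff_mul_norm_fderiv_le hx) (by positivity)
    _ = _ := by ring

theorem abs_cutoff_pow_smul_hess_sub_hess_le (hu : IsPucciSubsolution lam Lam b f u Ω c R)
    (hx : x ∈ upperContactSet (cutoff c R ^ (m + 2) * u) Ω c R M) (i j : Fin n) :
    |((cutoff c R ^ (m + 2)) x • hess n u x - hess n (cutoff c R ^ (m + 2) * u) x) i j| ≤
      12 / R ^ 2 * (m + 3) ^ 2 * (cutoff c R x ^ m * u x) := by
  have hux := hu.pos_of_mem_upperContactSet hx
  have hxR := hu.subset_ball hx.1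
  have hσ := cutoff_pos hxR
  have hcross := hu.abs_fderiv_cutoff_pow_apply_mul_fderiv_apply_le hx
  have hhess : |u x * hess n (cutoff c R ^ (m + 2)) x i j| ≤
      u x * (4 / R ^ 2 * (m + 2) ^ 2 * cutoff c R x ^ m) := by
    rw [abs_mul, abs_of_pos hux]
    gcongr
    exact abs_hess_cutoff_pow_le hxR i j
  rw [Matrix.sub_apply, hess_mul_apply (contDiff_cutoff_pow _).contDiffAt (hu.contDiffAt hx.1),
    abs_sub_comm]
  calc _ = |u x * hess n (cutoff c R ^ (m + 2)) x i j +
          fderiv ℝ (cutoff c R ^ (m + 2)) x (EuclideanSpace.single i 1) *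
            fderiv ℝ u x (EuclideanSpace.single j 1) +
          fderiv ℝ (cutoff c R ^ (m + 2)) x (EuclideanSpace.single j 1) *
            fderiv ℝ u x (EuclideanSpace.single i 1)| := by
        rw [Matrix.smul_apply, smul_eq_mul]
        ring_nf
    _ ≤ _ := (abs_add_three _ _ _).trans (add_le_add_three hhess (hcross i j) (hcross j i))
    _ = 4 / R ^ 2 * ((m + 2) * (3 * m + 8)) * (cutoff c R x ^ m * u x) := by ring
    _ ≤ 4 / R ^ 2 * (3 * (m + 3) ^ 2) * (cutoff c R x ^ m * u x) := by
        gcongr 4 / R ^ 2 * ?_ * _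
        nlinarith [m.cast_nonneg (α := ℝ)]
    _ = _ := by ring

theorem mul_neg_trace_hess_cutoff_pow_mul_le (hu : IsPucciSubsolution lam Lam b f u Ω c R)
    (hlam : 0 ≤ lam) (hLam : lam ≤ Lam)
    (hx : x ∈ upperContactSet (cutoff c R ^ (m + 2) * u) Ω c R M) :
    lam * (-hess n (cutoff c R ^ (m + 2) * u) x).trace ≤
      max (f x) 0 + cutoffConst n Lam R m * ((1 + |b x|) * (cutoff c R x ^ m * u x)) := by
  have hux := hu.pos_of_mem_upperContactSet hx
  have hgrad := hu.cutoff_mul_norm_fderiv_le hx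
  have hxR := hu.subset_ball hx.1
  have hσ := cutoff_pos hxR
  have hR : 0 < R := dist_nonneg.trans_lt hxR
  have hLam0 : 0 ≤ Lam := hlam.trans hLam
  have hdrift : cutoff c R x ^ (m + 2) * ‖fderiv ℝ u x‖ ≤
      2 / R * (m + 3) * (cutoff c R x ^ m * u x) := by
    calc _ = cutoff c R x ^ (m + 1) * (cutoff c R x * ‖fderiv ℝ u x‖) := by ring
      _ ≤ cutoff c R x ^ m * (2 / R * (m + 3) * u x) := by
          gcongr ?_ * ?_
          exact pow_le_pow_of_le_one hσ.le cutoff_le_one m.le_succ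
      _ = _ := by ring
  refine (hu.mul_neg_trace_le hLam hx.1 (pow_pos hσ (m + 2)) (pow_le_one₀ hσ.le cutoff_le_one)
    (add_sub_cancel _ _).symm hx.2.2.2.2 fun A hA ↦ hA.trace_mul_le_of_abs_apply_le hlam
      (hu.abs_cutoff_pow_smul_hess_sub_hess_le hx)).trans ?_
  have hdrift' := mul_le_mul_of_nonneg_left hdrift (abs_nonneg (b x))
  have hextra : 0 ≤ 2 / R * (m + 3) * (cutoff c R x ^ m * u x) +
      |b x| * (n ^ 2 * Lam * (12 / R ^ 2 * (m + 3) ^ 2 * (cutoff c R x ^ m * u x))) := by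
    positivity
  rw [cutoffConst]
  linarith

end IsPucciSubsolution

theorem pow_mul_le_rpow_mul_rpow {σ w : ℝ} (hσ : 0 < σ) (hσ1 : σ ≤ 1) (hw : 0 < w) (hs1 : s ≤ 1)
    (hm : 2 ≤ (m + 2) * s) (hM : σ ^ (m + 2) * w ≤ M) : σ ^ m * w ≤ M ^ (1 - s) * w ^ s := by
  have hexp : ((m + 2 : ℕ) : ℝ) * (1 - s) ≤ m := by
    push_cast
    linarith
  calc σ ^ m * w = σ ^ (m : ℝ) * (w ^ (1 - s) * w ^ s) := by
        rw [← Real.rpow_add hw, sub_add_cancel, Real.rpow_one, Real.rpow_natCast]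
    _ ≤ σ ^ (((m + 2 : ℕ) : ℝ) * (1 - s)) * (w ^ (1 - s) * w ^ s) := by
        gcongr ?_ * _
        exact Real.rpow_le_rpow_of_exponent_ge hσ hσ1 hexp
    _ = (σ ^ (m + 2) * w) ^ (1 - s) * w ^ s := by
        rw [Real.mul_rpow (by positivity) hw.le, ← Real.rpow_natCast_mul hσ.le, mul_assoc]
    _ ≤ M ^ (1 - s) * w ^ s := by
        gcongr

theorem le_of_le_add_mul_rpow_one_sub {A B U : ℝ} (hM : 0 < M) (hA : 0 ≤ A) (hB : 0 ≤ B)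
    (hU : 0 ≤ U) (hs : 0 < s) (h : M ≤ A + B * U ^ s * M ^ (1 - s)) :
    M ≤ 2 * A + (2 * B) ^ s⁻¹ * U := by
  rcases le_or_gt (M ^ s) (2 * B * U ^ s) with hMB | hMB
  · have : M ≤ (2 * B) ^ s⁻¹ * U := by
      calc M ≤ (2 * B * U ^ s) ^ s⁻¹ :=
            (Real.le_rpow_inv_iff_of_pos hM.le (by positivity) hs).mpr hMB
        _ = (2 * B) ^ s⁻¹ * U := by
            rw [Real.mul_rpow (by positivity) (by positivity), Real.rpow_rpow_inv hU hs.ne']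
    linarith
  · have hBM : 2 * (B * U ^ s * M ^ (1 - s)) ≤ M := by
      calc 2 * (B * U ^ s * M ^ (1 - s)) = 2 * B * U ^ s * M ^ (1 - s) := by ring
        _ ≤ M ^ s * M ^ (1 - s) := by gcongr
        _ = M := by rw [← Real.rpow_add hM, add_sub_cancel, Real.rpow_one]
    have : 0 ≤ (2 * B) ^ s⁻¹ * U := by positivity
    linarith

end LocalMaximum

section LpNorm

variable {α : Type*} [MeasurableSpace α] {μ : Measure α} {g w : α → ℝ} {p q k s : ℝ}

theorem eLpNorm'_mul_norm_rpow_le (hg : AEMeasurable g μ) (hw : AEMeasurable w μ) (hp : 0 < p)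
    (hpq : p < q) (hpqk : 1 / p = 1 / q + 1 / k) (hs : 0 < s) :
    eLpNorm' (fun x ↦ g x * ‖w x‖ ^ s) p μ ≤ eLpNorm' g q μ * eLpNorm' w (k * s) μ ^ s := by
  rw [← eLpNorm'_norm_rpow w k s hs]
  simpa using eLpNorm'_le_eLpNorm'_mul_eLpNorm' hg.aestronglyMeasurable
    (hw.norm.pow_const s).aestronglyMeasurable (· * ·) 1
    (.of_forall fun x ↦ by rw [one_mul, nnnorm_mul]) hp hpq hpqk

theorem eLpNorm'_one_add_abs_le (hg : AEMeasurable g μ) (hp : 0 < p) (hpq : p ≤ q) (hq : 1 ≤ q) :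
    eLpNorm' (fun x ↦ 1 + |g x|) p μ ≤
      (μ univ ^ (1 / q) + eLpNorm' g q μ) * μ univ ^ (1 / p - 1 / q) := by
  refine (eLpNorm'_le_eLpNorm'_mul_rpow_measure_univ hp hpq
    (aemeasurable_const.add hg.abs).aestronglyMeasurable).trans ?_
  gcongr
  refine (eLpNorm'_add_le (f := fun _ ↦ (1 : ℝ)) aestronglyMeasurable_const
    hg.abs.aestronglyMeasurable hq).trans_eq ?_
  rw [eLpNorm'_const _ (by linarith), enorm_one, one_mul]
  exact congrArg _ (eLpNorm'_norm (f := g))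

theorem exists_one_div_eq_one_div_add_one_div_of_lt {r : ℝ} (hp : 0 < p) (hpq : p < q)
    (hr : 0 < r) : ∃ q' k, p < q' ∧ q' ≤ q ∧ r ≤ k ∧ 1 / p = 1 / q' + 1 / k := by
  have hq : 0 < q := hp.trans hpq
  have hk₀ : 0 < p * q / (q - p) := div_pos (mul_pos hp hq) (sub_pos.mpr hpq)
  have hk : 1 / (p * q / (q - p) + r) ≤ 1 / p - 1 / q := by
    refine (one_div_le_one_div_of_le hk₀ (le_add_of_nonneg_right hr.le)).trans_eq ?_
    field_simp
  have hk' : 0 < 1 / (p * q / (q - p) + r) := by positivity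
  have hq' : 0 < 1 / p - 1 / (p * q / (q - p) + r) := by linarith [one_div_pos.mpr hq]
  refine ⟨1 / (1 / p - 1 / (p * q / (q - p) + r)), p * q / (q - p) + r,
    (lt_one_div hp hq').mpr (by linarith), (one_div_le hq' hq).mpr (by linarith), by linarith, ?_⟩
  rw [one_div_one_div, sub_add_cancel]

theorem exists_forall_eLpNorm'_one_add_abs_mul_rpow_le {r : ℝ} (hp : 1 ≤ p) (hpq : p < q)
    (hr : 0 < r) (K V : ℝ≥0) : ∃ (s : ℝ) (H : ℝ≥0), 0 < s ∧ s ≤ 1 ∧ ∀ (μ : Measure α) (g w : α → ℝ)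
      (U : ℝ≥0), μ univ ≤ V → AEMeasurable g μ → AEMeasurable w μ → eLpNorm' g q μ ≤ K →
        eLpNorm' w r μ ≤ U →
          eLpNorm' (fun x ↦ (1 + |g x|) * ‖w x‖ ^ s) p μ ≤ (H * U ^ s : ℝ≥0) := by
  obtain ⟨q', k, hpq', hq'q, hrk, hholder⟩ :=
    exists_one_div_eq_one_div_add_one_div_of_lt (by linarith) hpq hr
  have hk : 0 < k := hr.trans_le hrk
  have hs : 0 < r / k := by positivity
  have hqq' : 1 / q ≤ 1 / q' := one_div_le_one_div_of_le (by linarith) hq'q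
  refine ⟨r / k, (V ^ (1 / q) + K) * V ^ (1 / q' - 1 / q), hs, (div_le_one hk).mpr hrk,
    fun μ g w U hμ hg hw hgK hwU ↦ ?_⟩
  refine (eLpNorm'_mul_norm_rpow_le (aemeasurable_const.add hg.abs) hw (by linarith) hpq' hholder
    hs).trans ?_
  have hq : 0 ≤ 1 / q := one_div_nonneg.mpr (by linarith)
  rw [mul_div_cancel₀ r hk.ne', ENNReal.coe_mul, ENNReal.coe_mul, ENNReal.coe_add,
    ENNReal.coe_rpow_of_nonneg _ hq, ENNReal.coe_rpow_of_nonneg _ hs.le,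
    ENNReal.coe_rpow_of_nonneg _ (sub_nonneg.mpr hqq')]
  gcongr
  refine (eLpNorm'_one_add_abs_le hg (by linarith) hq'q (by linarith)).trans ?_
  gcongr

end LpNorm

section LocalMaximum

variable {n m : ℕ} {lam Lam R R' q r s : ℝ} {b f u : ℝ^n → ℝ} {Ω : Set (ℝ^n)} {c z : ℝ^n}

namespace IsPucciSubsolution

theorem cutoff_pow_mul_nonpos (hu : IsPucciSubsolution lam Lam b f u Ω c R)
    (hR : 0 < R) (hz : z ∈ closure Ω \ Ω) : (cutoff c R ^ (m + 2) * u) z ≤ 0 := by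
  rcases (hu.norm_sub_le_of_mem_closure hz.1).lt_or_eq with hzR | hzR
  · exact mul_nonpos_of_nonneg_of_nonpos
      (pow_nonneg (cutoff_pos (mem_ball_iff_norm.mpr hzR)).le _) (hu.nonpos z hz hzR)
  · rw [Pi.mul_apply, Pi.pow_apply, cutoff_eq_zero hR hzR, zero_pow (by lia), zero_mul]

theorem cutoff_pow_mul_le (hu : IsPucciSubsolution lam Lam b f u Ω c R) (hn : n ≠ 0)
    (hlam : 0 < lam) (hLam : lam ≤ Lam) (hs : 0 < s) (hs1 : s ≤ 1) (hm : 2 ≤ (m + 2) * s)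
    {F H U : ℝ≥0} (hF : eLpNorm' (fun x ↦ max (f x) 0) n (volume.restrict Ω) ≤ F)
    (hHU : eLpNorm' (fun x ↦ (1 + |b x|) * ‖max (u x) 0‖ ^ s) n (volume.restrict Ω) ≤
      (H * U ^ s : ℝ≥0)) (hz : z ∈ Ω) :
    cutoff c R z ^ (m + 2) * u z ≤ 2 * (abpConst n * R / lam * F) +
      (2 * (abpConst n * R / lam * cutoffConst n Lam R m * H)) ^ s⁻¹ * U := by
  have hR : 0 < R := dist_nonneg.trans_lt (hu.subset_ball hz)
  have hκ : 0 < abpConst n * R / lam := by have := abpConst_pos n; positivity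
  have hD : 0 < cutoffConst n Lam R m := cutoffConst_pos (hlam.le.trans hLam) hR
  have hcompact : IsCompact (closure Ω) :=
    (isBounded_ball.subset hu.subset_ball).isCompact_closure
  have hcont : ContinuousOn (cutoff c R ^ (m + 2) * u) (closure Ω) :=
    (contDiff_cutoff_pow _).continuous.continuousOn.mul hu.continuousOn
  obtain ⟨x₀, hx₀, hmax⟩ := hcompact.exists_isMaxOn ⟨z, subset_closure hz⟩ hcont
  refine le_trans (hmax (subset_closure hz)) ?_
  set M := (cutoff c R ^ (m + 2) * u) x₀
  rcases le_or_gt M 0 with hM0 | hM0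
  · exact hM0.trans (by positivity)
  have hx₀Ω : x₀ ∈ Ω := by
    by_contra hx₀Ω
    exact (hu.cutoff_pow_mul_nonpos hR ⟨hx₀, hx₀Ω⟩).not_gt hM0
  have hum : AEMeasurable u (volume.restrict Ω) :=
    (hu.continuousOn.mono subset_closure).aemeasurable hu.isOpen.measurableSet
  have hcontact (x) (hx : x ∈ upperContactSet (cutoff c R ^ (m + 2) * u) Ω c R (M / (2 * R))) :
      lam * (-hess n (cutoff c R ^ (m + 2) * u) x).trace ≤ max (f x) 0 +
        cutoffConst n Lam R m * M ^ (1 - s) * ((1 + |b x|) * ‖max (u x) 0‖ ^ s) := by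
    have hux := hu.pos_of_mem_upperContactSet hx
    refine (hu.mul_neg_trace_hess_cutoff_pow_mul_le hlam.le hLam hx).trans ?_
    rw [max_eq_left hux.le, Real.norm_of_nonneg hux.le, mul_assoc, mul_left_comm (M ^ _)]
    gcongr _ + _ * (_ * ?_)
    exact pow_mul_le_rpow_mul_rpow (cutoff_pos (hu.subset_ball hx.1)) cutoff_le_one hux hs1 hm
      (hmax (subset_closure hx.1))
  have habp := le_abpConst_mul_of_mul_neg_trace_hess_le hn hlam hu.isOpen hu.subset_ball hcont
    ((contDiff_cutoff_pow _).contDiffOn.mul hu.contDiffOn) (fun x ↦ hu.cutoff_pow_mul_nonpos hR)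
    hx₀Ω (mul_nonneg hD.le (Real.rpow_nonneg hM0.le _))
    (hu.aemeasurable_source.max aemeasurable_const)
    ((aemeasurable_const.add hu.aemeasurable_drift.abs).mul
      ((hum.max aemeasurable_const).norm.pow_const s)) hcontact hF hHU
  refine le_of_le_add_mul_rpow_one_sub hM0 (by positivity) (by positivity)
    U.coe_nonneg hs (habp.trans_eq ?_)
  rw [NNReal.coe_mul, NNReal.coe_rpow]
  ring

end IsPucciSubsolution

theorem exists_forall_isPucciSubsolution_le_mul_add (hn : n ≠ 0) (hlam : 0 < lam)
    (hLam : lam ≤ Lam) (hq : n < q) (hr : 0 < r) (K : ℝ≥0) (hR' : 0 ≤ R') (hR : R' < R) :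
    ∃ C, 0 < C ∧ ∀ b f u Ω c (F U : ℝ≥0), IsPucciSubsolution (n := n) lam Lam b f u Ω c R →
      eLpNorm' b q (volume.restrict Ω) ≤ K →
      eLpNorm' (fun x ↦ max (f x) 0) n (volume.restrict Ω) ≤ F →
      eLpNorm' (fun x ↦ max (u x) 0) r (volume.restrict Ω) ≤ U →
        ∀ x ∈ Ω, ‖x - c‖ ≤ R' → u x ≤ C * (F + U) := by
  obtain ⟨s, H, hs, hs1, hH⟩ := exists_forall_eLpNorm'_one_add_abs_mul_rpow_le (α := ℝ^n)
    (p := n) (by exact_mod_cast Nat.one_le_iff_ne_zero.mpr hn) hq hr K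
    (volume (ball (0 : ℝ^n) R)).toNNReal
  obtain ⟨m, hm⟩ : ∃ m : ℕ, 2 ≤ (m + 2) * s := by
    obtain ⟨m, hm⟩ := exists_nat_ge (2 / s)
    exact ⟨m, by linarith [(div_le_iff₀ hs).mp hm]⟩
  have hR0 : 0 < R := hR'.trans_lt hR
  have hδ : 0 < 1 - R' ^ 2 / R ^ 2 := by
    rw [sub_pos, ← div_pow]
    exact pow_lt_one₀ (by positivity) ((div_lt_one hR0).mpr hR) two_ne_zero
  have hκ : 0 < abpConst n * R / lam := div_pos (mul_pos (abpConst_pos n) hR0) hlam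
  set κ := abpConst n * R / lam
  have hD : 0 < cutoffConst n Lam R m := cutoffConst_pos (hlam.le.trans hLam) hR0
  set B := (2 * (κ * cutoffConst n Lam R m * H)) ^ s⁻¹
  have hB : 0 ≤ B := by positivity
  refine ⟨(2 * κ + B) / (1 - R' ^ 2 / R ^ 2) ^ (m + 2), by positivity,
    fun b f u Ω c F U hu hb hf hU x hx hxR ↦ ?_⟩
  have hΩ : volume.restrict Ω univ ≤ (volume (ball (0 : ℝ^n) R)).toNNReal := by
    rw [Measure.restrict_apply_univ, ENNReal.coe_toNNReal measure_ball_lt_top.ne]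
    exact (measure_mono hu.subset_ball).trans_eq (Measure.addHaar_ball_center _ _ _)
  have hum : AEMeasurable u (volume.restrict Ω) :=
    (hu.continuousOn.mono subset_closure).aemeasurable hu.isOpen.measurableSet
  have hbound := hu.cutoff_pow_mul_le hn hlam hLam hs hs1 hm hf
    (hH _ _ _ U hΩ hu.aemeasurable_drift (hum.max aemeasurable_const) hb hU) hx
  have hσ : (1 - R' ^ 2 / R ^ 2) ^ (m + 2) ≤ cutoff c R x ^ (m + 2) :=
    pow_le_pow_left₀ hδ.le (one_sub_sq_div_sq_le_cutoff hxR) _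
  rcases le_or_gt (u x) 0 with hux | hux
  · exact hux.trans (by positivity)
  rw [div_mul_eq_mul_div, le_div_iff₀' (by positivity)]
  have hcross : 0 ≤ B * F + 2 * κ * U :=
    add_nonneg (mul_nonneg hB F.coe_nonneg) (by positivity)
  linarith [mul_le_mul_of_nonneg_right hσ hux.le]

end LocalMaximum

section HalfBall

variable {n : ℕ} {hn : 1 ≤ n} {lam Lam : ℝ} {b f u : ℝ^n → ℝ} {x : ℝ^n} {p q r d R R' : ℝ}

theorem continuous_lastC : Continuous (lastC n hn) := by
  unfold lastC
  fun_prop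

theorem isOpen_halfBall : IsOpen (halfBall n hn R) :=
  (isOpen_lt continuous_norm continuous_const).inter (isOpen_lt continuous_const continuous_lastC)

theorem halfBall_subset_ball : halfBall n hn R ⊆ ball 0 R :=
  fun _ hx ↦ mem_ball_zero_iff.mpr hx.1

theorem halfBall_subset_halfBall (h : R' ≤ R) : halfBall n hn R' ⊆ halfBall n hn R :=
  fun _ hx ↦ ⟨hx.1.trans_le h, hx.2⟩

theorem closure_halfBall_subset : closure (halfBall n hn R) ⊆ {x | ‖x‖ ≤ R ∧ 0 ≤ lastC n hn x} :=
  closure_minimal (fun _ hx ↦ ⟨hx.1.le, hx.2.le⟩)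
    ((isClosed_le continuous_norm continuous_const).inter
      (isClosed_le continuous_const continuous_lastC))

theorem closure_halfBall_subset_union (h : R' < R) :
    closure (halfBall n hn R') ⊆ halfBall n hn R ∪ flatB n hn R := by
  intro x hx
  obtain ⟨hxR, hx0⟩ := closure_halfBall_subset hx
  rcases hx0.eq_or_lt with hx0 | hx0
  · exact .inr ⟨hxR.trans h.le, hx0.symm⟩
  · exact .inl ⟨hxR.trans_lt h, hx0⟩

theorem isPucciSubsolution_halfBall (hR : R' < R)
    (hb : AEMeasurable b (volume.restrict (halfBall n hn R)))
    (hf : AEMeasurable f (volume.restrict (halfBall n hn R)))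
    (hcont : ContinuousOn u (halfBall n hn R ∪ flatB n hn R))
    (hu : ContDiffOn ℝ 2 u (halfBall n hn R))
    (hsub : ∀ x ∈ halfBall n hn R, -f x ≤ pucciPlus n lam Lam (hess n u x) + b x * gradNorm n u x)
    (hflat : ∀ x ∈ flatB n hn R, u x ≤ 0) :
    IsPucciSubsolution lam Lam b f u (halfBall n hn R') 0 R' where
  isOpen := isOpen_halfBall
  subset_ball := halfBall_subset_ball
  aemeasurable_drift := hb.mono_set (halfBall_subset_halfBall hR.le)
  aemeasurable_source := hf.mono_set (halfBall_subset_halfBall hR.le)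
  continuousOn := hcont.mono (closure_halfBall_subset_union hR)
  contDiffOn := hu.mono (halfBall_subset_halfBall hR.le)
  nonpos x hx hxR := by
    rw [sub_zero] at hxR
    refine hflat x ⟨hxR.le.trans hR.le, ?_⟩
    exact le_antisymm (not_lt.mp fun h ↦ hx.2 ⟨hxR, h⟩) (closure_halfBall_subset hx.1).2
  neg_le x hx := hsub x (halfBall_subset_halfBall hR.le hx)

theorem norm_sub_single_le (x : ℝ^n) (i : Fin n) : ‖x - EuclideanSpace.single i (x i)‖ ≤ ‖x‖ := by
  rw [EuclideanSpace.norm_eq, EuclideanSpace.norm_eq]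
  gcongr with j
  rcases eq_or_ne j i with rfl | hj
  · simp
  · simp [hj]

theorem exists_lastC_eq_zero_norm_sub_eq (hx : 0 ≤ lastC n hn x) :
    ∃ c, lastC n hn c = 0 ∧ ‖c‖ ≤ ‖x‖ ∧ ‖x - c‖ = lastC n hn x := by
  unfold lastC at hx ⊢
  refine ⟨x - EuclideanSpace.single _ (x ⟨n - 1, Nat.sub_one_lt_of_lt hn⟩), by simp,
    norm_sub_single_le x _, ?_⟩
  rw [sub_sub_cancel, PiLp.norm_single, Real.norm_of_nonneg hx]

theorem IsPucciSubsolution.isBoundarySubsolution_inter_ball {c : ℝ^n} {ρ : ℝ} {K F : ℝ≥0}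
    (hu : IsPucciSubsolution lam Lam b f u (halfBall n hn R) 0 R) (hc : lastC n hn c = 0)
    (hcR : ‖c‖ + ρ ≤ R) (hρd : ρ ≤ d) (hq : 0 ≤ q)
    (hb : eLpNorm' b q (volume.restrict (halfBall n hn R)) ≤ K)
    (hf : eLpNorm' (fun x ↦ max (f x) 0) q
      (volume.restrict {x ∈ halfBall n hn R | lastC n hn x < d}) ≤ F) :
    IsBoundarySubsolution lam Lam q K F b f u (halfBall n hn R ∩ ball c ρ)
      ⟨n - 1, Nat.sub_one_lt_of_lt hn⟩ c ρ where
  toIsPucciSubsolution := hu.inter_ball (ball_subset_ball' (by rwa [dist_zero_right, add_comm]))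
  pos x hx := hx.1.2
  center := hc
  drift_le := (eLpNorm'_mono_measure _ (Measure.restrict_mono_set _ inter_subset_left) hq).trans hb
  source_le := by
    refine (eLpNorm'_mono_measure _ (Measure.restrict_mono_set _ ?_) hq).trans hf
    refine fun x hx ↦ ⟨hx.1, ?_⟩
    calc
      lastC n hn x = (x - c) ⟨n - 1, Nat.sub_one_lt_of_lt hn⟩ := by
        rw [PiLp.sub_apply]
        exact (sub_eq_self.mpr hc).symm
      _ ≤ ‖x - c‖ := (le_abs_self _).trans (PiLp.norm_apply_le (x - c) _)
      _ < d := (mem_ball_iff_norm.mp hx.2).trans_le hρd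

theorem exists_forall_halfBall_le_mul_lastC (hlam : 0 < lam) (hLam : lam ≤ Lam) (hq : n < q)
    (hr : 0 < r) (hd : 0 < d) (K : ℝ≥0) (hR' : 0 ≤ R') (hR : R' < R) :
    ∃ C, 0 < C ∧ ∀ b f u (F U : ℝ≥0),
      IsPucciSubsolution lam Lam b f u (halfBall n hn R) 0 R →
      eLpNorm' b q (volume.restrict (halfBall n hn R)) ≤ K →
      eLpNorm' (fun x ↦ max (f x) 0) n (volume.restrict (halfBall n hn R)) ≤ F →
      eLpNorm' (fun x ↦ max (f x) 0) q
        (volume.restrict {x ∈ halfBall n hn R | lastC n hn x < d}) ≤ F →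
      eLpNorm' (fun x ↦ max (u x) 0) r (volume.restrict (halfBall n hn R)) ≤ U →
        ∀ x ∈ halfBall n hn R', u x ≤ C * (F + U) * lastC n hn x := by
  obtain ⟨ρ, C₁, hρ, hρd, hC₁, hboundary⟩ := exists_forall_isBoundarySubsolution_le_mul_norm_sub n
    hlam hLam hq K (lt_min hd (half_pos (sub_pos.mpr hR)))
  obtain ⟨C₂, hC₂, hinterior⟩ := exists_forall_isPucciSubsolution_le_mul_add (n := n) (r := r)
    (Nat.one_le_iff_ne_zero.mp hn) hlam hLam hq hr K (R := R) (R' := R' + (R - R') / 2)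
    (by linarith) (by linarith)
  have hρR : ρ ≤ (R - R') / 2 := hρd.trans (min_le_right _ _)
  refine ⟨(ρ⁻¹ + C₁) * (C₂ + 1), by positivity, fun b f u F U hu hb hfn hfq hU x hx ↦ ?_⟩
  have hN : (C₂ + 1) * (F + U) = C₂ * (F + U) + (F + U) := by ring
  set N : ℝ := (C₂ + 1) * (F + U)
  have hFU : (0 : ℝ) ≤ F + U := by positivity
  have hN0 : 0 ≤ N := by positivity
  have hx0 : 0 < lastC n hn x := hx.2
  have huN (y) (hy : y ∈ halfBall n hn R) (hyR : ‖y‖ ≤ R' + (R - R') / 2) : u y ≤ N := by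
    have := hinterior b f u _ 0 F U hu hb hfn hU y hy (by rwa [sub_zero])
    linarith
  suffices u x ≤ ρ⁻¹ * N * lastC n hn x ∨ u x ≤ C₁ * N * lastC n hn x by
    have h₁ : 0 ≤ ρ⁻¹ * N * lastC n hn x := by positivity
    have h₂ : 0 ≤ C₁ * N * lastC n hn x := by positivity
    rcases this with h | h <;> linarith
  rcases le_or_gt ρ (lastC n hn x) with hxρ | hxρ
  · left
    refine (huN x (halfBall_subset_halfBall hR.le hx) (by linarith [hx.1])).trans ?_
    rw [mul_comm _ N, mul_assoc]
    exact le_mul_of_one_le_right hN0 ((le_inv_mul_iff₀ hρ).mpr (by rwa [mul_one]))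
  · right
    obtain ⟨c, hc, hcx, hnorm⟩ := exists_lastC_eq_zero_norm_sub_eq hx0.le
    have hcR : ‖c‖ < R' := hcx.trans_lt hx.1
    rw [← hnorm]
    refine hboundary b f u _ _ c F (hu.isBoundarySubsolution_inter_ball hc
      (by linarith) (hρd.trans (min_le_left _ _)) (n.cast_nonneg.trans hq.le) hb hfq) N
      (by linarith [U.coe_nonneg, mul_nonneg hC₂.le hFU]) (fun y hy ↦ huN y hy.1 ?_) x
      ⟨halfBall_subset_halfBall hR.le hx, mem_ball_iff_norm.mpr (hnorm.trans_lt hxρ)⟩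
    linarith [norm_le_norm_add_norm_sub' y c, mem_ball_iff_norm.mp hy.2]

theorem exists_forall_halfBall_ofReal_div_lastC_le (hlam : 0 < lam) (hLam : lam ≤ Lam)
    (hq : n < q) (hr : 0 < r) (hd : 0 < d) (K : ℝ≥0) (hR' : 0 ≤ R') (hR : R' < R) :
    ∃ C, 0 < C ∧ ∀ b f u, IsPucciSubsolution lam Lam b f u (halfBall n hn R) 0 R →
      eLpNorm' b q (volume.restrict (halfBall n hn R)) ≤ K → ∀ x ∈ halfBall n hn R',
        ENNReal.ofReal (max (u x) 0 / lastC n hn x) ≤ ENNReal.ofReal C *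
          (eLpNorm' (fun x ↦ max (u x) 0) r (volume.restrict (halfBall n hn R)) +
            (eLpNorm' (fun x ↦ max (f x) 0) n (volume.restrict (halfBall n hn R)) +
              eLpNorm' (fun x ↦ max (f x) 0) q
                (volume.restrict {x ∈ halfBall n hn R | lastC n hn x < d}))) := by
  obtain ⟨C, hC, hbound⟩ := exists_forall_halfBall_le_mul_lastC (hn := hn) hlam hLam hq hr hd K
    hR' hR
  refine ⟨C, hC, fun b f u hu hb x hx ↦ ?_⟩
  generalize hU : eLpNorm' (fun x ↦ max (u x) 0) r (volume.restrict (halfBall n hn R)) = U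
  generalize hF : eLpNorm' (fun x ↦ max (f x) 0) n (volume.restrict (halfBall n hn R)) +
    eLpNorm' (fun x ↦ max (f x) 0) q (volume.restrict {x ∈ halfBall n hn R | lastC n hn x < d}) = F
  rcases eq_or_ne (U + F) ∞ with hUF | hUF
  · rw [hUF, ENNReal.mul_top (by simpa using hC)]
    exact le_top
  lift U to ℝ≥0 using (ENNReal.add_ne_top.mp hUF).1
  lift F to ℝ≥0 using (ENNReal.add_ne_top.mp hUF).2
  have hux := hbound b f u F U hu hb (hF.le.trans' le_self_add) (hF.le.trans' le_add_self) hU.le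
    x hx
  have hx0 : 0 < lastC n hn x := hx.2
  rw [← ENNReal.coe_add, ← ENNReal.ofReal_coe_nnreal, ← ENNReal.ofReal_mul hC.le]
  refine ENNReal.ofReal_le_ofReal ((div_le_iff₀ hx0).mpr (max_le ?_ (by positivity)))
  rwa [NNReal.coe_add, add_comm (U : ℝ)]

theorem lintegral_max_rpow_rpow_eq_eLpNorm' (hr : 0 ≤ r) (E : Set (ℝ^n)) :
    (∫⁻ y in E, ENNReal.ofReal ((max (u y) 0) ^ r)) ^ (1 / r) =
      eLpNorm' (fun x ↦ max (u x) 0) r (volume.restrict E) := by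
  rw [← LpNormE_eq_eLpNorm' hr, LpNormE]
  simp only [abs_of_nonneg (le_max_right _ (0 : ℝ))]

theorem eLpNorm'_add_le_mul_LpqNormHB (hq : 0 ≤ q) (hp : n ≤ p) (hR : R' ≤ R)
    (hf : AEMeasurable f (volume.restrict (halfBall n hn R))) :
    eLpNorm' f n (volume.restrict (halfBall n hn R')) +
        eLpNorm' f q (volume.restrict {x ∈ halfBall n hn R' | lastC n hn x < d}) ≤
      (volume (ball (0 : ℝ^n) R') ^ (1 / (n : ℝ) - 1 / p) + 1) * LpqNormHB n hn p q d R f := by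
  have hn0 : (0 : ℝ) < n := Nat.cast_pos.mpr hn
  have hsubset : halfBall n hn R' ⊆ halfBall n hn R := halfBall_subset_halfBall hR
  rw [LpqNormHB, LpNormE_eq_eLpNorm' (hn0.le.trans hp), LpNormE_eq_eLpNorm' hq, mul_add]
  gcongr
  · refine (eLpNorm'_restrict_le_mul_measure_rpow hn0 hp (hf.mono_set hsubset)
      halfBall_subset_ball).trans ?_
    rw [mul_comm]
    gcongr
    · exact le_self_add
    · exact hn0.le.trans hp
  · have hstrip : {x ∈ halfBall n hn R' | lastC n hn x < d} ⊆
        {x ∈ halfBall n hn R | lastC n hn x < d} := fun y hy ↦ ⟨hsubset hy.1, hy.2⟩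
    exact (eLpNorm'_mono_measure _ (Measure.restrict_mono_set _ hstrip) hq).trans
      (le_mul_of_one_le_left' le_add_self)

end HalfBall

theorem boundary_local_maximum_principle_general {n : ℕ} (hn : 1 ≤ n) {lam Lam p q d₀ r : ℝ}
    (hlam : 0 < lam) (hLam : lam ≤ Lam) (hq : n < q) (hp : n ≤ p) (hd₀ : 0 < d₀) (hr : 0 < r)
    (K : ℝ≥0) :
    ∃ C : ℝ, 0 < C ∧
      ∀ b f u : ℝ^n → ℝ,
        AEMeasurable b (volume.restrict (halfBall n hn 2)) →
        AEMeasurable f (volume.restrict (halfBall n hn 2)) →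
        LpNormE n q b (halfBall n hn 2) ≤ K →
        ContinuousOn u (halfBall n hn 2 ∪ flatB n hn 2) →
        ContDiffOn ℝ 2 u (halfBall n hn 2) →
        (∀ x ∈ halfBall n hn 2,
          -f x ≤ pucciPlus n lam Lam (hess n u x) + b x * gradNorm n u x) →
        (∀ x ∈ flatB n hn 2, u x ≤ 0) →
        ∀ x ∈ halfBall n hn 1,
          ENNReal.ofReal (max (u x) 0 / lastC n hn x) ≤ ENNReal.ofReal C *
            ((∫⁻ y in halfBall n hn (3 / 2), ENNReal.ofReal ((max (u y) 0) ^ r)) ^ (1 / r)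
              + LpqNormHB n hn p q d₀ 2 (fun y ↦ max (f y) 0)) := by
  have hn0 : (0 : ℝ) < n := Nat.cast_pos.mpr hn
  have hq0 : 0 ≤ q := (hn0.trans hq).le
  obtain ⟨C, hC, hbound⟩ := exists_forall_halfBall_ofReal_div_lastC_le (hn := hn) hlam hLam hq hr
    hd₀ K zero_le_one (R := 3 / 2) (by norm_num)
  set V := volume (ball (0 : ℝ^n) (3 / 2)) ^ (1 / (n : ℝ) - 1 / p)
  have hV : V ≠ ∞ := ENNReal.rpow_ne_top_of_nonneg
    (sub_nonneg.mpr (one_div_le_one_div_of_le hn0 hp)) measure_ball_lt_top.ne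
  have hR : (3 / 2 : ℝ) < 2 := by norm_num
  refine ⟨C * (V.toReal + 1), by positivity, fun b f u hb hf hbK hcont hu hsub hflat x hx ↦ ?_⟩
  rw [LpNormE_eq_eLpNorm' hq0] at hbK
  refine (hbound b f u (isPucciSubsolution_halfBall hR hb hf hcont hu hsub hflat)
    ((eLpNorm'_mono_measure _ (Measure.restrict_mono_set _ (halfBall_subset_halfBall hR.le))
      hq0).trans hbK) x hx).trans ?_
  rw [ENNReal.ofReal_mul hC.le, mul_assoc, ENNReal.ofReal_add (by positivity) zero_le_one,
    ENNReal.ofReal_toReal hV, ENNReal.ofReal_one, lintegral_max_rpow_rpow_eq_eLpNorm' hr.le]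
  gcongr
  rw [mul_add]
  exact add_le_add (le_mul_of_one_le_left' le_add_self)
    (eLpNorm'_add_le_mul_LpqNormHB hq0 hp hR.le (hf.max aemeasurable_const))

/-- Boundary local maximum principle in half-balls. -/
theorem boundary_local_maximum_principle
    (n : ℕ) (hn : 2 ≤ n) (lam Lam : ℝ) (hlam : 0 < lam) (hLam : lam ≤ Lam)
    (p q d0 K r : ℝ) (hq : (n : ℝ) < q) (hp : (n : ℝ) ≤ p) (hpq : p ≤ q)
    (hd0 : 0 < d0) (hd0' : d0 ≤ 1 / 4) (hK : 0 < K) (hr : 0 < r) :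
    ∃ C : ℝ, 0 < C ∧
      ∀ b f u : EuclideanSpace ℝ (Fin n) → ℝ,
        ContinuousOn b (halfBall n (by omega) 2) →
        ContinuousOn f (halfBall n (by omega) 2) →
        (∀ x ∈ halfBall n (by omega) 2, 0 ≤ b x) →
        LpNormE n q b (halfBall n (by omega) 2) ≤ ENNReal.ofReal K →
        ContinuousOn u (halfBall n (by omega) 2 ∪ flatB n (by omega) 2) →
        ContDiffOn ℝ 2 u (halfBall n (by omega) 2) →
        (∀ x ∈ halfBall n (by omega) 2,
          -f x ≤ pucciPlus n lam Lam (hess n u x) + b x * gradNorm n u x) →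
        (∀ x ∈ flatB n (by omega : 1 ≤ n) 2, u x ≤ 0) →
        ∀ x ∈ halfBall n (by omega : 1 ≤ n) 1,
          ENNReal.ofReal (max (u x) 0 / lastC n (by omega) x)
            ≤ ENNReal.ofReal C *
              ((∫⁻ y in halfBall n (by omega) (3 / 2),
                  ENNReal.ofReal ((max (u y) 0) ^ r)) ^ (1 / r)
                + LpqNormHB n (by omega) p q d0 2 (fun y => max (f y) 0)) := by
  obtain ⟨C, hC, h⟩ := boundary_local_maximum_principle_general (one_le_two.trans hn) hlam hLam hq
    hp hd0 hr K.toNNReal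
  exact ⟨C, hC, fun b f u hb hf _ ↦ h b f u (hb.aemeasurable isOpen_halfBall.measurableSet)
    (hf.aemeasurable isOpen_halfBall.measurableSet)⟩
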